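/- arXiv:2605.09214 — 7 statements merged into one kernel-verified Lean document; each statement's English description precedes it below -/
import Mathlib

section
/- Let r, r̂ : 𝒜 → [0,1] and let π̂ be the maximizer of J(·; r̂) over Δ(𝒜). Then there exists ū ∈ [0,1] such that, writing r_ū = (1−ū) r + ū r̂ and π_ū for the (unique) maximizer of J(·; r_ū), the suboptimality satisfies the exact identity SubOpt(π̂) = (η/2) · ( Σ_a (π_ū(a)²/π^ref(a)) (r(a) − r̂(a))² − ( Σ_a (π_ū(a)²/π^ref(a)) (r(a) − r̂(a)) )² / ( Σ_a π_ū(a)²/π^ref(a) ) ). -/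
open Finset

/-- Forward-KL-regularized objective `J(π; g) = ⟨g, π⟩ - η⁻¹ KL(π^ref ‖ π)`
for a bandit with finite action set. -/
noncomputable def J {A : Type*} [Fintype A] (η : ℝ) (pref g p : A → ℝ) : ℝ :=
  ∑ a, g a * p a - η⁻¹ * ∑ a, pref a * Real.log (pref a / p a)

/-- `p` maximizes `J(·; g)` over the simplex `Δ(A)` (on which the objective is `-∞`
unless the policy has full support, so it suffices to compare with full-support
distributions). -/
def IsMaximizer {A : Type*} [Fintype A] (η : ℝ) (pref g p : A → ℝ) : Prop :=
  (∀ a, 0 ≤ p a) ∧ ∑ a, p a = 1 ∧ (∀ a, 0 < p a) ∧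
    ∀ q : A → ℝ, (∀ a, 0 ≤ q a) → ∑ a, q a = 1 → (∀ a, 0 < q a) →
      J η pref g q ≤ J η pref g p

/-!
The forward-KL objective is maximized exactly where `g a + η⁻¹ * (pref a / p a)` does not depend on
`a`. Subtracting these equations for two rewards `g` and `h` with maximizers `p` and `q` gives

  `q - p = η * w * ((h - g) - m)`, with weights `w = p * q / pref` and `m` the `w`-mean of `h - g`,

so `p` is continuous, and then differentiable, in `g`. Along the segment
`g_u = (1 - u) * r + u * rhat` with maximizers `π_u`, the gradient of `J(·; r)` at `π_u` is a
constant plus `u * (r - rhat)`, whence `d/du J(π_u; r) = -η * u * V_u`, where `V_u` is the bracket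
in the theorem. Cauchy's mean value theorem against `u ^ 2` then turns the factor `u` into `1 / 2`.
-/

open Filter Topology

section CenterMass

variable {ι E : Type*} [NormedAddCommGroup E] [NormedSpace ℝ E] {s : Finset ι} {w : ι → ℝ}

theorem norm_centerMass_le {x : ι → E} {C : ℝ} (hw : ∀ i ∈ s, 0 ≤ w i) (hw_sum : 0 < ∑ i ∈ s, w i)
    (hx : ∀ i ∈ s, ‖x i‖ ≤ C) : ‖s.centerMass w x‖ ≤ C :=
  mem_closedBall_zero_iff.1 <| (convex_closedBall 0 C).centerMass_mem hw hw_sum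
    fun i hi => mem_closedBall_zero_iff.2 (hx i hi)

theorem tendsto_centerMass {κ : Type*} {f : Filter κ} {W : κ → ι → ℝ} {X : κ → ι → E} {x : ι → E}
    (hW : Tendsto W f (𝓝 w)) (hX : Tendsto X f (𝓝 x)) (hw : ∑ i ∈ s, w i ≠ 0) :
    Tendsto (fun k => s.centerMass (W k) (X k)) f (𝓝 (s.centerMass w x)) := by
  rw [tendsto_pi_nhds] at hW hX
  exact ((tendsto_finsetSum _ fun i _ => hW i).inv₀ hw).smul
    (tendsto_finsetSum _ fun i _ => (hW i).smul (hX i))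

theorem centerMass_eq_sum_mul_div_sum (s : Finset ι) (w x : ι → ℝ) :
    s.centerMass w x = (∑ i ∈ s, w i * x i) / ∑ i ∈ s, w i := by
  simp only [centerMass, smul_eq_mul, div_eq_inv_mul]

theorem centerMass_eq_iff_sum_mul_sub_eq_zero {x : ι → ℝ} {c : ℝ} (hw : ∑ i ∈ s, w i ≠ 0) :
    s.centerMass w x = c ↔ ∑ i ∈ s, w i * (x i - c) = 0 := by
  rw [centerMass_eq_sum_mul_div_sum, div_eq_iff hw]
  simp only [mul_sub, sum_sub_distrib, ← sum_mul, sub_eq_zero, mul_comm c]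

end CenterMass

section WeightedSums

variable {A : Type*} [Fintype A] {w : A → ℝ}

/-- The sum of squared deviations of `x` from its `w`-weighted mean, i.e. the weighted variance
multiplied by the total weight, written as `∑ w x² - (∑ w x)² / ∑ w`. -/
noncomputable def scatter (w x : A → ℝ) : ℝ :=
  ∑ a, w a * x a ^ 2 - (∑ a, w a * x a) ^ 2 / ∑ a, w a

theorem sum_mul_mul_sub_centerMass_eq_scatter (w x : A → ℝ) :
    ∑ a, x a * (w a * (x a - univ.centerMass w x)) = scatter w x := by
  have expand (a : A) : x a * (w a * (x a - univ.centerMass w x)) =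
      w a * x a ^ 2 - w a * x a * univ.centerMass w x := by ring
  rw [sum_congr rfl fun a _ => expand a, sum_sub_distrib, ← sum_mul, centerMass_eq_sum_mul_div_sum,
    scatter]
  ring

theorem scatter_neg (w x : A → ℝ) : scatter w (-x) = scatter w x := by
  simp only [scatter, Pi.neg_apply, mul_neg, sum_neg_distrib, neg_sq]

theorem exists_forall_lt_sum_div_sub_eq [Nonempty A] (hw : ∀ a, 0 < w a) (g : A → ℝ) {s : ℝ}
    (hs : 0 < s) : ∃ l, (∀ a, g a < l) ∧ ∑ a, w a / (l - g a) = s := by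
  obtain ⟨b, hb⟩ := Finite.exists_max g
  have hwb_le : w b ≤ ∑ a, w a := single_le_sum (fun a _ => (hw a).le) (mem_univ b)
  set lo := g b + w b / s with hlo
  set hi := g b + (∑ a, w a) / s with hhi
  have hlo_hi : lo ≤ hi := by rw [hlo, hhi]; gcongr
  have hlt {l : ℝ} (hl : lo ≤ l) (a : A) : g a < l :=
    (hb a).trans_lt ((lt_add_of_pos_right _ (div_pos (hw b) hs)).trans_le hl)
  have hcont : ContinuousOn (fun l => ∑ a, w a / (l - g a)) (Set.Icc lo hi) :=
    continuousOn_finsetSum _ fun a _ => continuousOn_const.div (by fun_prop)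
      fun l hl => (sub_pos.2 (hlt hl.1 a)).ne'
  have hsum_hi : ∑ a, w a / (hi - g a) ≤ s := by
    have hW : 0 < ∑ a, w a := (hw b).trans_le hwb_le
    calc ∑ a, w a / (hi - g a)
      _ ≤ ∑ a, w a / ((∑ a, w a) / s) := by
        refine sum_le_sum fun a _ => div_le_div_of_nonneg_left (hw a).le (by positivity) ?_
        linarith [hb a]
      _ = s := by rw [← sum_div, div_div_cancel₀ hW.ne']
  have hsum_lo : s ≤ ∑ a, w a / (lo - g a) :=
    calc s = w b / (lo - g b) := by rw [hlo, add_sub_cancel_left, div_div_cancel₀ (hw b).ne']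
      _ ≤ ∑ a, w a / (lo - g a) :=
        single_le_sum (f := fun a => w a / (lo - g a))
          (fun a _ => (div_pos (hw a) (sub_pos.2 (hlt le_rfl a))).le) (mem_univ b)
  obtain ⟨l, hl, hl_eq⟩ := intermediate_value_Icc' hlo_hi hcont ⟨hsum_hi, hsum_lo⟩
  exact ⟨l, hlt hl.1, hl_eq⟩

end WeightedSums

theorem exists_sub_eq_half_of_hasDerivAt_id_mul {F φ : ℝ → ℝ}
    (hF : ContinuousOn F (Set.Icc 0 1))
    (hF' : ∀ u ∈ Set.Ioo (0 : ℝ) 1, HasDerivAt F (u * φ u) u) :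
    ∃ u ∈ Set.Ioo (0 : ℝ) 1, F 1 - F 0 = φ u / 2 := by
  obtain ⟨u, hu, h⟩ := exists_ratio_hasDerivAt_eq_ratio_slope F (fun u => u * φ u) zero_lt_one
    hF hF' (fun u => u ^ 2) (fun u => 2 * u) (by fun_prop)
    (fun u _ => by simpa using hasDerivAt_pow 2 u)
  refine ⟨u, hu, mul_left_cancel₀ hu.1.ne' ?_⟩
  linarith

section Policies

variable {A : Type*} [Fintype A] {η : ℝ} {pref g h p q : A → ℝ}

theorem hasDerivAt_J {p : ℝ → A → ℝ} {p' : A → ℝ} {u : ℝ} (hpref : ∀ a, pref a ≠ 0)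
    (hpu : ∀ a, p u a ≠ 0) (hp : HasDerivAt p p' u) :
    HasDerivAt (fun v => J η pref g (p v)) (∑ a, (g a + η⁻¹ * (pref a / p u a)) * p' a) u := by
  rw [hasDerivAt_pi] at hp
  have hlog (a : A) : HasDerivAt (fun v => pref a * Real.log (pref a / p v a))
      (-(pref a / p u a * p' a)) u := by
    refine ((((hasDerivAt_const u (pref a)).fun_div (hp a) (hpu a)).log
      (div_ne_zero (hpref a) (hpu a))).const_mul (pref a)).congr_deriv ?_
    have := hpref a
    have := hpu a
    field_simp
    ring
  refine ((HasDerivAt.fun_sum fun a _ => (hp a).const_mul (g a)).sub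
    ((HasDerivAt.fun_sum fun a _ => hlog a).const_mul η⁻¹)).congr_deriv ?_
  rw [mul_sum, ← sum_sub_distrib]
  exact sum_congr rfl fun a _ => by ring

/-- The first-order (KKT) conditions for maximizing `J(·; g)` over full-support distributions: all
partial derivatives of the objective at `p` agree, their common value being the Lagrange multiplier
of the constraint `∑ a, p a = 1`. -/
structure IsKKTPoint (η : ℝ) (pref g p : A → ℝ) : Prop where
  pos : ∀ a, 0 < p a
  sum_eq_one : ∑ a, p a = 1
  exists_multiplier : ∃ l, ∀ a, g a + η⁻¹ * (pref a / p a) = l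

theorem exists_isKKTPoint [Nonempty A] (hη : 0 < η) (hpref : ∀ a, 0 < pref a) (g : A → ℝ) :
    ∃ p, IsKKTPoint η pref g p := by
  obtain ⟨l, hl, hsum⟩ := exists_forall_lt_sum_div_sub_eq hpref g hη
  have hgap (a : A) : 0 < l - g a := sub_pos.2 (hl a)
  refine ⟨fun a => pref a / (l - g a) / η,
    fun a => div_pos (div_pos (hpref a) (hgap a)) hη, ?_, l, fun a => ?_⟩
  · rw [← sum_div, hsum, div_self hη.ne']
  · have := (hpref a).ne'
    have := (hgap a).ne'
    field_simp
    ring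

namespace IsKKTPoint

theorem le_one (hp : IsKKTPoint η pref g p) (a : A) : p a ≤ 1 :=
  hp.sum_eq_one ▸ single_le_sum (fun b _ => (hp.pos b).le) (mem_univ a)

theorem nonempty (hp : IsKKTPoint η pref g p) : Nonempty A :=
  univ_nonempty_iff.1 <| nonempty_of_sum_ne_zero (hp.sum_eq_one.trans_ne one_ne_zero)

theorem weight_pos (hp : IsKKTPoint η pref g p) (hq : IsKKTPoint η pref h q)
    (hpref : ∀ a, 0 < pref a) (a : A) : 0 < (p * q / pref) a :=
  div_pos (mul_pos (hp.pos a) (hq.pos a)) (hpref a)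

theorem J_sub_J (hp : IsKKTPoint η pref g p) (hpref : ∀ a, pref a ≠ 0) (hq : ∀ a, q a ≠ 0)
    (hq_sum : ∑ a, q a = 1) :
    J η pref g p - J η pref g q =
      η⁻¹ * ∑ a, pref a * (q a / p a - 1 - Real.log (q a / p a)) := by
  obtain ⟨l, hl⟩ := hp.exists_multiplier
  have hterm (a : A) : g a * p a - η⁻¹ * (pref a * Real.log (pref a / p a)) -
      (g a * q a - η⁻¹ * (pref a * Real.log (pref a / q a))) =
        l * (p a - q a) + η⁻¹ * (pref a * (q a / p a - 1 - Real.log (q a / p a))) := by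
    have hpa := (hp.pos a).ne'
    rw [Real.log_div (hpref a) hpa, Real.log_div (hpref a) (hq a), Real.log_div (hq a) hpa, ← hl a]
    field_simp
    ring
  simp only [J, mul_sum, ← sum_sub_distrib, hterm]
  rw [sum_add_distrib, ← mul_sum, sum_sub_distrib, hp.sum_eq_one, hq_sum, sub_self, mul_zero,
    zero_add]

theorem isMaximizer (hp : IsKKTPoint η pref g p) (hη : 0 < η) (hpref : ∀ a, 0 < pref a) :
    IsMaximizer η pref g p := by
  refine ⟨fun a => (hp.pos a).le, hp.sum_eq_one, hp.pos, fun q _ hq_sum hq => sub_nonneg.1 ?_⟩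
  rw [hp.J_sub_J (fun a => (hpref a).ne') (fun a => (hq a).ne') hq_sum]
  exact mul_nonneg (inv_nonneg.2 hη.le) <| sum_nonneg fun a _ => mul_nonneg (hpref a).le <|
    sub_nonneg.2 <| Real.log_le_sub_one_of_pos <| div_pos (hq a) (hp.pos a)

theorem eq_of_isMaximizer (hp : IsKKTPoint η pref g p) (hη : 0 < η) (hpref : ∀ a, 0 < pref a)
    (hq : IsMaximizer η pref g q) : q = p := by
  obtain ⟨-, hq_sum, hq_pos, hq_max⟩ := hq
  by_contra hne
  obtain ⟨b, hb⟩ := Function.ne_iff.1 hne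
  have hratio (a : A) : 0 < q a / p a := div_pos (hq_pos a) (hp.pos a)
  have hlt : J η pref g q < J η pref g p := by
    rw [← sub_pos, hp.J_sub_J (fun a => (hpref a).ne') (fun a => (hq_pos a).ne') hq_sum]
    refine mul_pos (inv_pos.2 hη) <| sum_pos' (fun a _ => mul_nonneg (hpref a).le ?_)
      ⟨b, mem_univ b, mul_pos (hpref b) ?_⟩
    · exact sub_nonneg.2 (Real.log_le_sub_one_of_pos (hratio a))
    · exact sub_pos.2 <| Real.log_lt_sub_one_of_pos (hratio b) <|
        (div_eq_one_iff_eq (hp.pos b).ne').not.2 hb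
  exact hlt.not_ge (hq_max p (fun a => (hp.pos a).le) hp.sum_eq_one hp.pos)

theorem sub_eq (hp : IsKKTPoint η pref g p) (hq : IsKKTPoint η pref h q) (hη : η ≠ 0)
    (hpref : ∀ a, 0 < pref a) (a : A) :
    q a - p a =
      η * ((p * q / pref) a * ((h - g) a - univ.centerMass (p * q / pref) (h - g))) := by
  obtain ⟨l, hl⟩ := hp.exists_multiplier
  obtain ⟨k, hk⟩ := hq.exists_multiplier
  have := hp.nonempty
  set w := p * q / pref with hw
  have hw_sum : 0 < ∑ a, w a :=
    sum_pos (fun a _ => hp.weight_pos hq hpref a) univ_nonempty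
  have hdiff (a : A) : q a - p a = η * (w a * ((h - g) a - (k - l))) := by
    have := (hp.pos a).ne'
    have := (hq.pos a).ne'
    have := (hpref a).ne'
    simp only [hw, Pi.div_apply, Pi.mul_apply, Pi.sub_apply, ← hl a, ← hk a]
    field_simp
    ring
  have hmean : univ.centerMass w (h - g) = k - l := by
    have hzero : η * ∑ a, w a * ((h - g) a - (k - l)) = 0 := by
      rw [mul_sum, ← sum_congr rfl fun a _ => hdiff a, sum_sub_distrib, hp.sum_eq_one,
        hq.sum_eq_one, sub_self]
    exact (centerMass_eq_iff_sum_mul_sub_eq_zero hw_sum.ne').2 <|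
      (mul_eq_zero.1 hzero).resolve_left hη
  rw [hmean, hdiff]

theorem abs_sub_le (hp : IsKKTPoint η pref g p) (hq : IsKKTPoint η pref h q) (hη : 0 < η)
    (hpref : ∀ a, 0 < pref a) (a : A) : |q a - p a| ≤ η * (1 / pref a * (2 * ‖h - g‖)) := by
  have := hp.nonempty
  set w := p * q / pref
  have hw_pos : ∀ a, 0 < w a := hp.weight_pos hq hpref
  have hw_le : w a ≤ 1 / pref a :=
    div_le_div_of_nonneg_right (mul_le_one₀ (hp.le_one a) (hq.pos a).le (hq.le_one a)) (hpref a).le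
  rw [hp.sub_eq hq hη.ne' hpref, abs_mul, abs_mul, abs_of_pos hη, abs_of_pos (hw_pos a)]
  refine mul_le_mul_of_nonneg_left
    (mul_le_mul hw_le ?_ (abs_nonneg _) (one_div_pos.2 (hpref a)).le) hη.le
  calc |(h - g) a - univ.centerMass w (h - g)|
    _ ≤ |(h - g) a| + |univ.centerMass w (h - g)| := abs_sub _ _
    _ ≤ ‖h - g‖ + ‖h - g‖ :=
      add_le_add (norm_le_pi_norm (h - g) a) <|
        norm_centerMass_le (fun b _ => (hw_pos b).le) (sum_pos (fun b _ => hw_pos b) univ_nonempty)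
          fun b _ => norm_le_pi_norm (h - g) b
    _ = 2 * ‖h - g‖ := (two_mul _).symm

end IsKKTPoint

theorem IsMaximizer.isKKTPoint (hp : IsMaximizer η pref g p) (hη : 0 < η)
    (hpref : ∀ a, 0 < pref a) : IsKKTPoint η pref g p := by
  have : Nonempty A :=
    univ_nonempty_iff.1 <| nonempty_of_sum_ne_zero (hp.2.1.trans_ne one_ne_zero)
  obtain ⟨q, hq⟩ := exists_isKKTPoint hη hpref g
  rwa [hq.eq_of_isMaximizer hη hpref hp]

section Path

variable {g p : ℝ → A → ℝ} {g' : A → ℝ} {u : ℝ}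

theorem continuousAt_of_isKKTPoint (hη : 0 < η) (hpref : ∀ a, 0 < pref a)
    (hp : ∀ v, IsKKTPoint η pref (g v) (p v)) (hg : ContinuousAt g u) : ContinuousAt p u := by
  refine continuousAt_pi.2 fun a => tendsto_iff_dist_tendsto_zero.2 ?_
  have hnorm : Tendsto (fun v => η * (1 / pref a * (2 * ‖g v - g u‖))) (𝓝 u) (𝓝 0) := by
    have hdist := tendsto_iff_norm_sub_tendsto_zero.1 hg.tendsto
    simpa using ((hdist.const_mul 2).const_mul (1 / pref a)).const_mul η
  exact squeeze_zero (fun _ => dist_nonneg)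
    (fun v => (hp u).abs_sub_le (hp v) hη hpref a) hnorm

theorem hasDerivAt_of_isKKTPoint (hη : 0 < η) (hpref : ∀ a, 0 < pref a)
    (hp : ∀ v, IsKKTPoint η pref (g v) (p v)) (hg : HasDerivAt g g' u) :
    HasDerivAt p
      (fun a => η * ((p u * p u / pref) a * (g' a - univ.centerMass (p u * p u / pref) g'))) u := by
  have := (hp u).nonempty
  have hslope (v : ℝ) (a : A) : slope (fun v => p v a) u v =
      η * ((p u * p v / pref) a *
        (slope g u v a - univ.centerMass (p u * p v / pref) (slope g u v))) := by
    have hmean : univ.centerMass (p u * p v / pref) (slope g u v) =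
        (v - u)⁻¹ • univ.centerMass (p u * p v / pref) (g v - g u) :=
      centerMass_smul ..
    rw [hmean, slope_def_module, (hp u).sub_eq (hp v) hη.ne' hpref, slope_def_module]
    simp only [smul_eq_mul, Pi.smul_apply]
    ring
  have hp_tendsto : Tendsto p (𝓝[≠] u) (𝓝 (p u)) :=
    (continuousAt_of_isKKTPoint hη hpref hp hg.continuousAt).tendsto.mono_left nhdsWithin_le_nhds
  have hw_tendsto : Tendsto (fun v => p u * p v / pref) (𝓝[≠] u) (𝓝 (p u * p u / pref)) := by
    simp only [div_eq_mul_inv]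
    exact (hp_tendsto.const_mul (p u)).mul_const pref⁻¹
  have hw_sum : 0 < ∑ a, (p u * p u / pref) a :=
    sum_pos (fun a _ => (hp u).weight_pos (hp u) hpref a) univ_nonempty
  have hg_tendsto := hg.tendsto_slope
  refine hasDerivAt_pi.2 fun a => hasDerivAt_iff_tendsto_slope.2 ?_
  simp only [funext fun v => hslope v a]
  exact (((tendsto_pi_nhds.1 hw_tendsto a).mul ((tendsto_pi_nhds.1 hg_tendsto a).sub
    (tendsto_centerMass hw_tendsto hg_tendsto hw_sum.ne'))).const_mul η)

end Path

theorem hasDerivAt_J_of_isKKTPoint_segment {r rhat : A → ℝ} {p : ℝ → A → ℝ} (hη : 0 < η)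
    (hpref : ∀ a, 0 < pref a)
    (hp : ∀ u, IsKKTPoint η pref (fun a => (1 - u) * r a + u * rhat a) (p u)) (u : ℝ) :
    HasDerivAt (fun v => J η pref r (p v)) (u * -(η * scatter (p u ^ 2 / pref) (r - rhat))) u := by
  have := (hp u).nonempty
  rw [pow_two]
  set w := p u * p u / pref
  set d := rhat - r with hd
  have hw_sum : 0 < ∑ a, w a :=
    sum_pos (fun a _ => (hp u).weight_pos (hp u) hpref a) univ_nonempty
  have hsegment : HasDerivAt (fun v a => (1 - v) * r a + v * rhat a) d u := by
    refine hasDerivAt_pi.2 fun a => ?_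
    refine ((((hasDerivAt_id u).const_sub 1).mul_const (r a)).add
      ((hasDerivAt_id u).mul_const (rhat a))).congr_deriv ?_
    simp only [hd, Pi.sub_apply]
    ring
  obtain ⟨l, hl⟩ := (hp u).exists_multiplier
  have hgrad (a : A) : r a + η⁻¹ * (pref a / p u a) = l - u * d a := by
    rw [← hl a, hd, Pi.sub_apply]
    ring
  refine (hasDerivAt_J (fun a => (hpref a).ne') (fun a => ((hp u).pos a).ne')
    (hasDerivAt_of_isKKTPoint hη hpref hp hsegment)).congr_deriv ?_
  calc ∑ a, (r a + η⁻¹ * (pref a / p u a)) * (η * (w a * (d a - univ.centerMass w d)))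
    _ = l * η * ∑ a, w a * (d a - univ.centerMass w d) -
        u * η * ∑ a, d a * (w a * (d a - univ.centerMass w d)) := by
      rw [mul_sum, mul_sum, ← sum_sub_distrib]
      exact sum_congr rfl fun a _ => by rw [hgrad]; ring
    _ = u * -(η * scatter w (r - rhat)) := by
      rw [(centerMass_eq_iff_sum_mul_sub_eq_zero hw_sum.ne').1 rfl,
        sum_mul_mul_sub_centerMass_eq_scatter, ← scatter_neg, hd, neg_sub]
      ring

end Policies

theorem stmt2_general {A : Type*} [Fintype A] (η : ℝ) (hη : 0 < η)
    (pref : A → ℝ) (hpref : ∀ a, 0 < pref a) (r rhat : A → ℝ)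
    (πstar : A → ℝ) (hstar : IsMaximizer η pref r πstar)
    (πhat : A → ℝ) (hhat : IsMaximizer η pref rhat πhat) :
    ∃ u ∈ Set.Ioo (0 : ℝ) 1, ∃ πu : A → ℝ,
      IsMaximizer η pref (fun a => (1 - u) * r a + u * rhat a) πu ∧
      J η pref r πstar - J η pref r πhat =
        η / 2 * ((∑ a, (πu a) ^ 2 / pref a * (r a - rhat a) ^ 2) -
          (∑ a, (πu a) ^ 2 / pref a * (r a - rhat a)) ^ 2 /
            (∑ a, (πu a) ^ 2 / pref a)) := by
  have := (hstar.isKKTPoint hη hpref).nonempty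
  choose p hp using fun u : ℝ =>
    exists_isKKTPoint hη hpref fun a => (1 - u) * r a + u * rhat a
  have hp_zero : πstar = p 0 := (hp 0).eq_of_isMaximizer hη hpref (by simpa using hstar)
  have hp_one : πhat = p 1 := (hp 1).eq_of_isMaximizer hη hpref (by simpa using hhat)
  have hderiv := hasDerivAt_J_of_isKKTPoint_segment hη hpref hp
  obtain ⟨u, hu, hJ⟩ := exists_sub_eq_half_of_hasDerivAt_id_mul
    (fun v _ => (hderiv v).continuousAt.continuousWithinAt) (fun v _ => hderiv v)
  refine ⟨u, hu, p u, (hp u).isMaximizer hη hpref, ?_⟩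
  change _ = η / 2 * scatter (p u ^ 2 / pref) (r - rhat)
  rw [hp_zero, hp_one]
  linarith

/-- Mean-value-type exact identity for the forward-KL-regularized
suboptimality of the maximizer `π̂` of `J(·; r̂)`. -/
theorem stmt2 {A : Type*} [Fintype A]
    (η : ℝ) (hη : 0 < η)
    (pref : A → ℝ) (hpref : ∀ a, 0 < pref a) (hprefsum : ∑ a, pref a = 1)
    (r rhat : A → ℝ)
    (hr : ∀ a, r a ∈ Set.Icc (0 : ℝ) 1) (hrhat : ∀ a, rhat a ∈ Set.Icc (0 : ℝ) 1)
    (πstar : A → ℝ) (hstar : IsMaximizer η pref r πstar)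
    (πhat : A → ℝ) (hhat : IsMaximizer η pref rhat πhat) :
    ∃ u ∈ Set.Icc (0 : ℝ) 1, ∀ πu : A → ℝ,
      IsMaximizer η pref (fun a => (1 - u) * r a + u * rhat a) πu →
      J η pref r πstar - J η pref r πhat =
        η / 2 * ((∑ a, (πu a) ^ 2 / pref a * (r a - rhat a) ^ 2) -
          (∑ a, (πu a) ^ 2 / pref a * (r a - rhat a)) ^ 2 /
            (∑ a, (πu a) ^ 2 / pref a)) := by
  obtain ⟨u, hu, π, hπ, h⟩ := stmt2_general η hη pref hpref r rhat πstar hstar πhat hhat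
  exact ⟨u, Set.Ioo_subset_Icc_self hu, fun πu hπu =>
    (hπ.isKKTPoint hη hpref).eq_of_isMaximizer hη hpref hπu ▸ h⟩
end

section
/- Let r, r̂ : 𝒜 → [0,1] with r(a) ≥ r̂(a) for every a ∈ 𝒜 (pessimism), and let π̂ be the maximizer of J(·; r̂) over Δ(𝒜). Then the forward-KL-regularized suboptimality satisfies SubOpt(π̂) = J(π*; r) − J(π̂; r) ≤ 2η Σ_{a ∈ 𝒜} (π*(a)²/π^ref(a)) (r(a) − r̂(a))². -/
open Finset

/-!
Maximality of `π̂` for `r̂` reduces the suboptimality to the linear gap `∑ (r - r̂)(π* - π̂)`.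
At a maximizer of `J(·; g)` the marginal value `g a + η⁻¹ π^ref(a) / π(a)` does not depend on `a`.
Compare the marginal values at an arbitrary `a` with those at an action `b` such that
`π*(b) ≤ π̂(b)`, which exists because both policies sum to one: pessimism at `b` gives
`π^ref(a) / π̂(a) - π^ref(a) / π*(a) ≤ η (r(a) - r̂(a))`, and this bounds each term of the gap.
-/

/-- The marginal value `∂J(p; g)/∂p(a)` of action `a` at the policy `p`; first-order optimality over
the simplex says that it is the same for all actions. -/
noncomputable def marginalValue {A : Type*} (η : ℝ) (pref g p : A → ℝ) (a : A) : ℝ :=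
  g a + η⁻¹ * (pref a / p a)

theorem hasDerivAt_mul_log_div_add_mul (w v : ℝ) {x : ℝ} (hx : x ≠ 0) :
    HasDerivAt (fun t : ℝ => w * Real.log (w / (x + t * v))) (-(w / x * v)) 0 := by
  rcases eq_or_ne w 0 with rfl | hw
  · simpa using hasDerivAt_const (0 : ℝ) (0 : ℝ)
  have hline : HasDerivAt (fun t : ℝ => x + t * v) v 0 := by
    simpa using ((hasDerivAt_id (0 : ℝ)).mul_const v).const_add x
  have hx₀ : x + 0 * v ≠ 0 := by simpa using hx
  have hquot : HasDerivAt (fun t : ℝ => w / (x + t * v)) (-(w * v) / x ^ 2) 0 := by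
    simpa using (hasDerivAt_const (0 : ℝ) w).fun_div hline hx₀
  refine ((hquot.log (div_ne_zero hw hx₀)).const_mul w).congr_deriv ?_
  rw [zero_mul, add_zero]
  field_simp

section Objective

variable {A : Type*} [Fintype A] {η : ℝ} {pref g p : A → ℝ}

theorem hasDerivAt_J_add_mul (hp : ∀ a, p a ≠ 0) (v : A → ℝ) :
    HasDerivAt (fun t : ℝ => J η pref g fun a => p a + t * v a)
      (∑ a, marginalValue η pref g p a * v a) 0 := by
  have hreward (a : A) : HasDerivAt (fun t : ℝ => g a * (p a + t * v a)) (g a * v a) 0 := by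
    simpa using (((hasDerivAt_id (0 : ℝ)).mul_const (v a)).const_add (p a)).const_mul (g a)
  have hdiv (a : A) := hasDerivAt_mul_log_div_add_mul (pref a) (v a) (hp a)
  refine ((HasDerivAt.fun_sum fun a _ => hreward a).sub
    ((HasDerivAt.fun_sum fun a _ => hdiv a).const_mul η⁻¹)).congr_deriv ?_
  rw [mul_sum, ← sum_sub_distrib]
  refine sum_congr rfl fun a _ => ?_
  rw [marginalValue]
  ring

theorem J_sub_J_left (η : ℝ) (pref g g' p : A → ℝ) :
    J η pref g p - J η pref g' p = ∑ a, (g a - g' a) * p a := by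
  simp only [J, sub_sub_sub_cancel_right, sub_mul, sum_sub_distrib]

end Objective

namespace IsMaximizer

variable {A : Type*} [Fintype A] {η : ℝ} {pref g g' p q : A → ℝ}

theorem sum_eq_one (h : IsMaximizer η pref g p) : ∑ a, p a = 1 := h.2.1

theorem pos (h : IsMaximizer η pref g p) (a : A) : 0 < p a := h.2.2.1 a

theorem J_le (h : IsMaximizer η pref g p) (hq : ∀ a, 0 < q a) (hq_sum : ∑ a, q a = 1) :
    J η pref g q ≤ J η pref g p :=
  h.2.2.2 q (fun a => (hq a).le) hq_sum hq

theorem isLocalMax_add_mul (h : IsMaximizer η pref g p) {v : A → ℝ} (hv : ∑ a, v a = 0) :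
    IsLocalMax (fun t : ℝ => J η pref g fun a => p a + t * v a) 0 := by
  have hpos_near : ∀ᶠ t : ℝ in nhds 0, ∀ a, 0 < p a + t * v a := by
    refine Filter.eventually_all.2 fun a => ?_
    have hcont : Continuous fun t : ℝ => p a + t * v a := by fun_prop
    exact hcont.continuousAt.eventually_const_lt (by simpa using h.pos a)
  filter_upwards [hpos_near] with t ht
  have hsum_t : ∑ a, (p a + t * v a) = 1 := by
    rw [sum_add_distrib, ← mul_sum, hv, h.sum_eq_one, mul_zero, add_zero]
  simpa using h.J_le ht hsum_t

theorem sum_marginalValue_mul_eq_zero (h : IsMaximizer η pref g p) {v : A → ℝ}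
    (hv : ∑ a, v a = 0) : ∑ a, marginalValue η pref g p a * v a = 0 :=
  (h.isLocalMax_add_mul hv).hasDerivAt_eq_zero
    (hasDerivAt_J_add_mul (fun a => (h.pos a).ne') v)

theorem marginalValue_eq (h : IsMaximizer η pref g p) (a b : A) :
    marginalValue η pref g p a = marginalValue η pref g p b := by
  classical
  have hdir := h.sum_marginalValue_mul_eq_zero
    (v := fun c => (Pi.single a 1 : A → ℝ) c - (Pi.single b 1 : A → ℝ) c) (by simp)
  simpa [mul_sub, Pi.single_apply, sub_eq_zero] using hdir

theorem J_sub_J_le (hq : IsMaximizer η pref g' q) (hp : ∀ a, 0 < p a) (hp_sum : ∑ a, p a = 1) :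
    J η pref g p - J η pref g q ≤ ∑ a, (g a - g' a) * (p a - q a) := by
  have hopt : J η pref g' p ≤ J η pref g' q := hq.J_le hp hp_sum
  calc J η pref g p - J η pref g q
      ≤ (J η pref g p - J η pref g' p) - (J η pref g q - J η pref g' q) := by linarith
    _ = ∑ a, (g a - g' a) * (p a - q a) := by
      simp only [J_sub_J_left, mul_sub, sum_sub_distrib]

theorem div_sub_div_le (hp : IsMaximizer η pref g p) (hq : IsMaximizer η pref g' q)
    (hη : 0 < η) (hpref : ∀ a, 0 ≤ pref a) (hle : ∀ a, g' a ≤ g a) (a : A) :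
    pref a / q a - pref a / p a ≤ η * (g a - g' a) := by
  obtain ⟨b, -, hb⟩ : ∃ b ∈ univ, p b ≤ q b :=
    exists_le_of_sum_le ⟨a, mem_univ a⟩ (hp.sum_eq_one.trans hq.sum_eq_one.symm).le
  have hdiv : η⁻¹ * (pref b / q b) ≤ η⁻¹ * (pref b / p b) :=
    mul_le_mul_of_nonneg_left (div_le_div_of_nonneg_left (hpref b) (hp.pos b) hb)
      (inv_nonneg.2 hη.le)
  have hpab := hp.marginalValue_eq a b
  have hqab := hq.marginalValue_eq a b
  simp only [marginalValue] at hpab hqab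
  rw [← inv_mul_le_iff₀ hη, mul_sub]
  linarith [hle b]

end IsMaximizer

theorem mul_sub_le_of_div_sub_div_le {c w x y d : ℝ} (hc : 0 ≤ c) (hw : 0 < w) (hx : 0 < x)
    (hy : 0 < y) (hd : 0 ≤ d) (h : w / y - w / x ≤ c * d) :
    d * (x - y) ≤ c * (x ^ 2 / w * d ^ 2) := by
  rcases le_total x y with hxy | hyx
  · calc d * (x - y) ≤ 0 := mul_nonpos_of_nonneg_of_nonpos hd (sub_nonpos.2 hxy)
      _ ≤ c * (x ^ 2 / w * d ^ 2) := by positivity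
  · calc d * (x - y) = d * (x * y / w) * (w / y - w / x) := by field_simp
      _ ≤ d * (x * y / w) * (c * d) := by gcongr
      _ ≤ d * (x * x / w) * (c * d) := by gcongr
      _ = c * (x ^ 2 / w * d ^ 2) := by ring

theorem stmt4_general {A : Type*} [Fintype A] {η : ℝ} (hη : 0 < η)
    {pref : A → ℝ} (hpref : ∀ a, 0 < pref a)
    {r rhat : A → ℝ} (hpess : ∀ a, rhat a ≤ r a)
    {πstar : A → ℝ} (hstar : IsMaximizer η pref r πstar)
    {πhat : A → ℝ} (hhat : IsMaximizer η pref rhat πhat) :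
    J η pref r πstar - J η pref r πhat ≤
      η * ∑ a, (πstar a) ^ 2 / pref a * (r a - rhat a) ^ 2 := by
  have hratio (a : A) : pref a / πhat a - pref a / πstar a ≤ η * (r a - rhat a) :=
    hstar.div_sub_div_le hhat hη (fun a => (hpref a).le) hpess a
  calc J η pref r πstar - J η pref r πhat
      ≤ ∑ a, (r a - rhat a) * (πstar a - πhat a) := hhat.J_sub_J_le hstar.pos hstar.sum_eq_one
    _ ≤ ∑ a, η * ((πstar a) ^ 2 / pref a * (r a - rhat a) ^ 2) :=
      sum_le_sum fun a _ => mul_sub_le_of_div_sub_div_le hη.le (hpref a) (hstar.pos a)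
        (hhat.pos a) (sub_nonneg.2 (hpess a)) (hratio a)
    _ = η * ∑ a, (πstar a) ^ 2 / pref a * (r a - rhat a) ^ 2 := (mul_sum _ _ _).symm

/-- Under pessimism `r̂ ≤ r`, the forward-KL-regularized suboptimality
of the maximizer `π̂` of `J(·; r̂)` satisfies
`SubOpt(π̂) ≤ 2η ∑_a (π*(a)²/π^ref(a)) (r(a) - r̂(a))²`. -/
theorem stmt4 {A : Type*} [Fintype A]
    (η : ℝ) (hη : 0 < η)
    (pref : A → ℝ) (hpref : ∀ a, 0 < pref a) (hprefsum : ∑ a, pref a = 1)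
    (r rhat : A → ℝ)
    (hr : ∀ a, r a ∈ Set.Icc (0 : ℝ) 1) (hrhat : ∀ a, rhat a ∈ Set.Icc (0 : ℝ) 1)
    (hpess : ∀ a, rhat a ≤ r a)
    (πstar : A → ℝ) (hstar : IsMaximizer η pref r πstar)
    (πhat : A → ℝ) (hhat : IsMaximizer η pref rhat πhat) :
    J η pref r πstar - J η pref r πhat ≤
      2 * η * ∑ a, (πstar a) ^ 2 / pref a * (r a - rhat a) ^ 2 := by
  linarith [stmt4_general hη hpref hpess hstar hhat, hstar.J_le hhat.pos hhat.sum_eq_one]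
end

section
/- Let π̂ be any probability distribution on 𝒜 with full support. Then the forward-KL-regularized suboptimality satisfies the exact identity SubOpt(π̂) = η^{-1} Σ_{a ∈ 𝒜} π^ref(a) · ψ( π̂(a)/π*(a) ), where ψ(x) = x − 1 − log x. -/
open Finset

/-! The objective is linear in the policy plus `η⁻¹ ∑ π^ref log π`, so its gap between two policies
is a Bregman divergence, namely the `ψ`-sum, minus the directional derivative at the first policy.
That derivative vanishes at an extremum, because the difference of two distributions is tangent to
the simplex. -/

open Filter Topology

/-- The full-support probability distributions on `A`, i.e. the relative interior of the simplex
`Δ(A)`: the set over which `IsMaximizer` maximizes `J`. -/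
def openSimplex (A : Type*) [Fintype A] : Set (A → ℝ) :=
  {p | (∀ a, 0 < p a) ∧ ∑ a, p a = 1}

theorem eventually_forall_pos_add_mul {A : Type*} [Finite A] {p d : A → ℝ}
    (hp : ∀ a, 0 < p a) :
    ∀ᶠ t : ℝ in 𝓝 0, ∀ a, 0 < p a + t * d a := by
  refine eventually_all.2 fun a => ?_
  have hcont : ContinuousAt (fun t : ℝ => p a + t * d a) 0 := by fun_prop
  exact hcont.eventually_const_lt (by simpa using hp a)

section

variable {A : Type*} [Fintype A] {η : ℝ} {pref g p q d : A → ℝ}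

theorem eventually_add_smul_mem_openSimplex (hp : p ∈ openSimplex A) (hd : ∑ a, d a = 0) :
    ∀ᶠ t : ℝ in 𝓝 0, p + t • d ∈ openSimplex A := by
  filter_upwards [eventually_forall_pos_add_mul hp.1] with t ht
  refine ⟨ht, ?_⟩
  simp only [Pi.add_apply, Pi.smul_apply, smul_eq_mul, sum_add_distrib, ← mul_sum, hp.2, hd,
    mul_zero, add_zero]

theorem J_eq_sum_add_sum_log_sub (hpref : ∀ a, 0 ≤ pref a) (hp : ∀ a, 0 < p a) :
    J η pref g p = ∑ a, g a * p a + η⁻¹ * ∑ a, pref a * Real.log (p a) -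
      η⁻¹ * ∑ a, pref a * Real.log (pref a) := by
  have hlog : ∀ a, pref a * Real.log (pref a / p a) =
      pref a * Real.log (pref a) - pref a * Real.log (p a) := fun a => by
    rcases (hpref a).eq_or_lt with h | h
    · simp only [← h, zero_mul, sub_zero]
    · rw [Real.log_div h.ne' (hp a).ne', mul_sub]
  simp only [J, hlog, sum_sub_distrib]
  ring

theorem hasLineDerivAt_J (hpref : ∀ a, 0 ≤ pref a) (hp : ∀ a, 0 < p a) :
    HasLineDerivAt ℝ (J η pref g) (∑ a, g a * d a + η⁻¹ * ∑ a, pref a * (d a / p a)) p d := by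
  have hline (a : A) : HasDerivAt (fun t : ℝ => p a + t * d a) (d a) 0 := by
    simpa using ((hasDerivAt_id (0 : ℝ)).mul_const (d a)).const_add (p a)
  have hlog (a : A) : HasDerivAt (fun t : ℝ => Real.log (p a + t * d a)) (d a / p a) 0 := by
    simpa using (hline a).log (by simpa using (hp a).ne')
  have hreward : HasDerivAt (fun t : ℝ => ∑ a, g a * (p a + t * d a)) (∑ a, g a * d a) 0 :=
    HasDerivAt.fun_sum fun a _ => (hline a).const_mul (g a)
  have hcrossEntropy : HasDerivAt (fun t : ℝ => ∑ a, pref a * Real.log (p a + t * d a))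
      (∑ a, pref a * (d a / p a)) 0 :=
    HasDerivAt.fun_sum fun a _ => (hlog a).const_mul (pref a)
  refine ((hreward.add (hcrossEntropy.const_mul η⁻¹)).sub_const
    (η⁻¹ * ∑ a, pref a * Real.log (pref a))).congr_of_eventuallyEq ?_
  filter_upwards [eventually_forall_pos_add_mul hp] with t ht
  exact J_eq_sum_add_sum_log_sub hpref ht

theorem sum_mul_div_eq_neg_of_isLocalExtrOn (hη : η ≠ 0) (hpref : ∀ a, 0 ≤ pref a)
    (hp : p ∈ openSimplex A) (hext : IsLocalExtrOn (J η pref g) (openSimplex A) p)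
    (hd : ∑ a, d a = 0) :
    ∑ a, pref a * (d a / p a) = -(η * ∑ a, g a * d a) := by
  have hline : Tendsto (fun t : ℝ => p + t • d) (𝓝 0) (𝓝[openSimplex A] p) :=
    tendsto_nhdsWithin_iff.2 ⟨Continuous.tendsto' (by fun_prop) _ _ (by simp),
      eventually_add_smul_mem_openSimplex hp hd⟩
  have hzero : ∑ a, g a * d a + η⁻¹ * ∑ a, pref a * (d a / p a) = 0 :=
    IsExtrFilter.hasLineDerivAt_eq_zero hext (hasLineDerivAt_J hpref hp.1) hline
  rwa [add_comm, add_eq_zero_iff_eq_neg, inv_mul_eq_iff_eq_mul₀ hη, mul_neg] at hzero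

theorem J_sub_J_eq_sum_sub_sum (hpref : ∀ a, 0 ≤ pref a) (hp : ∀ a, 0 < p a) (hq : ∀ a, 0 < q a) :
    J η pref g p - J η pref g q =
      η⁻¹ * ∑ a, pref a * (q a / p a - 1 - Real.log (q a / p a)) -
        (∑ a, g a * (q a - p a) + η⁻¹ * ∑ a, pref a * ((q a - p a) / p a)) := by
  have hψ (a : A) : pref a * (q a / p a - 1 - Real.log (q a / p a)) =
      pref a * ((q a - p a) / p a) - (pref a * Real.log (q a) - pref a * Real.log (p a)) := by
    rw [Real.log_div (hq a).ne' (hp a).ne', sub_div, div_self (hp a).ne']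
    ring
  rw [J_eq_sum_add_sum_log_sub hpref hp, J_eq_sum_add_sum_log_sub hpref hq]
  simp only [hψ, mul_sub, sum_sub_distrib]
  ring

theorem IsMaximizer.mem_openSimplex (h : IsMaximizer η pref g p) : p ∈ openSimplex A :=
  ⟨h.2.2.1, h.2.1⟩

theorem IsMaximizer.isMaxOn (h : IsMaximizer η pref g p) :
    IsMaxOn (J η pref g) (openSimplex A) p :=
  fun q hq => h.2.2.2 q (fun a => (hq.1 a).le) hq.2 hq.1

end

theorem stmt6_general {A : Type*} [Fintype A] {η : ℝ} (hη : η ≠ 0)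
    {pref : A → ℝ} (hpref : ∀ a, 0 ≤ pref a) {r πstar πhat : A → ℝ}
    (hstar : πstar ∈ openSimplex A)
    (hext : IsLocalExtrOn (J η pref r) (openSimplex A) πstar) (hhat : πhat ∈ openSimplex A) :
    J η pref r πstar - J η pref r πhat =
      η⁻¹ * ∑ a, pref a *
        (πhat a / πstar a - 1 - Real.log (πhat a / πstar a)) := by
  have htangent : ∑ a, (πhat a - πstar a) = 0 := by
    rw [sum_sub_distrib, hhat.2, hstar.2, sub_self]
  rw [J_sub_J_eq_sum_sub_sum hpref hstar.1 hhat.1,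
    sum_mul_div_eq_neg_of_isLocalExtrOn hη hpref hstar hext htangent, mul_neg,
    inv_mul_cancel_left₀ hη, add_neg_cancel, sub_zero]

/-- Learner-agnostic exact suboptimality decomposition: for any
full-support distribution `π̂`,
`SubOpt(π̂) = η⁻¹ ∑_a π^ref(a) ψ(π̂(a)/π*(a))`, where `ψ(x) = x - 1 - log x`. -/
theorem stmt6 {A : Type*} [Fintype A]
    (η : ℝ) (hη : 0 < η)
    (pref : A → ℝ) (hpref : ∀ a, 0 < pref a) (hprefsum : ∑ a, pref a = 1)
    (r : A → ℝ) (hr : ∀ a, r a ∈ Set.Icc (0 : ℝ) 1)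
    (πstar : A → ℝ) (hstar : IsMaximizer η pref r πstar)
    (πhat : A → ℝ) (hhat0 : ∀ a, 0 < πhat a) (hhat1 : ∑ a, πhat a = 1) :
    J η pref r πstar - J η pref r πhat =
      η⁻¹ * ∑ a, pref a *
        (πhat a / πstar a - 1 - Real.log (πhat a / πstar a)) := by
  exact stmt6_general hη.ne' (fun a => (hpref a).le) hstar.mem_openSimplex
    hstar.isMaxOn.isExtr.localize ⟨hhat0, hhat1⟩
end

section
/- Let 𝒮, 𝒜 be finite sets, ρ ∈ Δ(𝒮), π^ref a full-support behavior policy, r : 𝒮 × 𝒜 → [0,1], η > 0, and β > 0. Suppose f̂ : 𝒮 × 𝒜 → ℝ satisfies |f̂(s,a) − r(s,a)| ≤ Γ(s,a) := β · D_𝒢((s,a); π^ref) for all (s,a), and let f_p = f̂ − Γ and π̂ = argmax_π ⟨f_p, π⟩ − η^{-1} KL(π^ref ‖ π). Then f_p ≤ r pointwise and SubOpt_{FKL}(π̂) ≤ 8 η C^{π*} β² D²_{π*}, where D²_{π*} = E_{(s,a)∼ρ×π*_{FKL}} D²_𝒢((s,a); π^ref). -/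
open Finset

/-- Contextual forward-KL-regularized objective
`J_FKL(π; g) = E_{s∼ρ}[⟨g(s,·), π(·|s)⟩ - η⁻¹ KL(π^ref(·|s) ‖ π(·|s))]`. -/
noncomputable def JFKL {S A : Type*} [Fintype S] [Fintype A]
    (η : ℝ) (ρ : S → ℝ) (pref g π : S → A → ℝ) : ℝ :=
  ∑ s, ρ s * ((∑ a, g s a * π s a) -
    η⁻¹ * ∑ a, pref s a * Real.log (pref s a / π s a))

/-- `π` maximizes `J_FKL(·; g)` over `Δ(A|S)` (on which the objective is `-∞` unless
the policy has full support, so it suffices to compare with full-support policies). -/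
def IsPolicyMax {S A : Type*} [Fintype S] [Fintype A]
    (η : ℝ) (ρ : S → ℝ) (pref g : S → A → ℝ) (π : S → A → ℝ) : Prop :=
  (∀ s, (∀ a, 0 < π s a) ∧ ∑ a, π s a = 1) ∧
    ∀ π' : S → A → ℝ, (∀ s, (∀ a, 0 < π' s a) ∧ ∑ a, π' s a = 1) →
      JFKL η ρ pref g π' ≤ JFKL η ρ pref g π

/-!
The forward-KL penalty is, up to the factor `η⁻¹`, a log barrier weighted by `π^ref`. The
first-order condition for the maximizer `π̂` of `J_FKL(·; f)` therefore says that moving to a policy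
`π` costs exactly `η⁻¹ E_{ρ × π^ref}[d(π, π̂)]`, where `d` is the Itakura–Saito divergence, the
Bregman divergence of `-log`. With respect to another reward `r ≥ f`, the gain of `π` over `π̂` is
thus `⟨r - f, π - π̂⟩` minus this cost. An action with `π ≤ π̂` contributes nothing positive; where
`π ≥ π̂` the cost is at least `η⁻¹ π^ref (1 - π̂ / π)² / 2`, and completing the square in
`1 - π̂ / π` leaves `η π² (r - f)² / (2 π^ref)`. Pessimism supplies `0 ≤ r - f ≤ 2 Γ`.
-/

/-- The Itakura–Saito divergence between positive reals, i.e. the Bregman divergence of `-log`. It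
measures the loss in the forward-KL objective when leaving a maximizer. -/
noncomputable def itakuraSaito (x y : ℝ) : ℝ :=
  x / y - 1 - Real.log (x / y)

lemma itakuraSaito_nonneg {x y : ℝ} (hx : 0 < x) (hy : 0 < y) : 0 ≤ itakuraSaito x y :=
  sub_nonneg.mpr (Real.log_le_sub_one_of_pos (div_pos hx hy))

lemma log_le_sub_inv_div_two {w : ℝ} (hw : 1 ≤ w) : Real.log w ≤ (w - w⁻¹) / 2 := by
  rw [← Real.sinh_log (zero_lt_one.trans_le hw)]
  exact Real.self_le_sinh_iff.mpr (Real.log_nonneg hw)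

lemma sq_one_sub_div_le_itakuraSaito {x y : ℝ} (hy : 0 < y) (hyx : y ≤ x) :
    (1 - y / x) ^ 2 / 2 ≤ itakuraSaito x y := by
  have hx : 0 < x := hy.trans_le hyx
  have hlog : Real.log (x / y) ≤ (x / y - y / x) / 2 := by
    simpa only [inv_div] using log_le_sub_inv_div_two ((one_le_div hy).mpr hyx)
  have hgap : x / y - 1 - (x / y - y / x) / 2 - (1 - y / x) ^ 2 / 2 =
      (x - y) ^ 3 / (2 * x ^ 2 * y) := by
    field_simp
    ring
  have hgap_nonneg : 0 ≤ (x - y) ^ 3 / (2 * x ^ 2 * y) :=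
    div_nonneg (pow_nonneg (sub_nonneg.mpr hyx) 3) (by positivity)
  unfold itakuraSaito
  linarith

lemma mul_sub_sub_itakuraSaito_le {η q e x y : ℝ} (hη : 0 < η) (hq : 0 < q) (he : 0 ≤ e)
    (hx : 0 < x) (hy : 0 < y) :
    e * (x - y) - η⁻¹ * (q * itakuraSaito x y) ≤ η / 2 * (x / q) * (x * e ^ 2) := by
  rcases le_total x y with hxy | hyx
  · have hgain : e * (x - y) ≤ 0 := mul_nonpos_of_nonneg_of_nonpos he (sub_nonpos.mpr hxy)
    have hcost : 0 ≤ η⁻¹ * (q * itakuraSaito x y) := by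
      have hdiv := itakuraSaito_nonneg hx hy
      positivity
    have hbound : 0 ≤ η / 2 * (x / q) * (x * e ^ 2) := by positivity
    linarith
  · have hcost : η⁻¹ * (q * ((1 - y / x) ^ 2 / 2)) ≤ η⁻¹ * (q * itakuraSaito x y) := by
      gcongr
      exact sq_one_sub_div_le_itakuraSaito hy hyx
    have hsquare : η / 2 * (x / q) * (x * e ^ 2) -
        (e * (x - y) - η⁻¹ * (q * ((1 - y / x) ^ 2 / 2))) =
          (η * x * e - q * (1 - y / x)) ^ 2 / (2 * η * q) := by
      field_simp
      ring
    have hsquare_nonneg : 0 ≤ (η * x * e - q * (1 - y / x)) ^ 2 / (2 * η * q) := by positivity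
    linarith

lemma hasDerivAt_log_div_lineMap {q x y : ℝ} (hq : q ≠ 0) (hy : y ≠ 0) :
    HasDerivAt (fun t : ℝ => Real.log (q / AffineMap.lineMap y x t)) (1 - x / y) 0 := by
  have hline : HasDerivAt (fun t : ℝ => AffineMap.lineMap y x t) (x - y) 0 :=
    AffineMap.hasDerivAt_lineMap
  have hlog := ((hasDerivAt_const (0 : ℝ) q).fun_div hline (by simpa using hy)).log
    (by simp [hq, hy])
  refine hlog.congr_deriv ?_
  simp only [AffineMap.lineMap_apply_zero]
  field_simp
  ring

section Policies

variable {S A : Type*}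

/-- The concentrability coefficient `C^π = sup_{s,a} π(a|s) / π^ref(a|s)` of `π` with respect to
the behavior policy `pref`. -/
noncomputable def concentrability (pref π : S → A → ℝ) : ℝ :=
  ⨆ p : S × A, π p.1 p.2 / pref p.1 p.2

lemma div_le_concentrability [Finite S] [Finite A] (pref π : S → A → ℝ) (s : S) (a : A) :
    π s a / pref s a ≤ concentrability pref π :=
  le_ciSup (f := fun p : S × A => π p.1 p.2 / pref p.1 p.2) (Set.finite_range _).bddAbove (s, a)

lemma concentrability_nonneg {pref π : S → A → ℝ} (hpref : ∀ s a, 0 ≤ pref s a)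
    (hπ : ∀ s a, 0 ≤ π s a) : 0 ≤ concentrability pref π :=
  Real.iSup_nonneg fun p => div_nonneg (hπ p.1 p.2) (hpref p.1 p.2)

/-- A policy that gives every action positive probability in every state; the condition that
`IsPolicyMax` imposes on its competitors. -/
def IsFullSupportPolicy [Fintype A] (π : S → A → ℝ) : Prop :=
  ∀ s, (∀ a, 0 < π s a) ∧ ∑ a, π s a = 1

lemma IsFullSupportPolicy.eventually_lineMap [Finite S] [Fintype A] {π π' : S → A → ℝ}
    (hπ : IsFullSupportPolicy π) (hπ' : ∀ s, ∑ a, π' s a = 1) :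
    ∀ᶠ t : ℝ in nhds 0,
      IsFullSupportPolicy fun s a => AffineMap.lineMap (π s a) (π' s a) t := by
  have hpos : ∀ᶠ t : ℝ in nhds 0, ∀ s a, 0 < AffineMap.lineMap (π s a) (π' s a) t := by
    refine Filter.eventually_all.mpr fun s => Filter.eventually_all.mpr fun a => ?_
    refine AffineMap.lineMap_continuous.continuousAt.eventually_const_lt ?_
    simpa only [AffineMap.lineMap_apply_zero] using (hπ s).1 a
  filter_upwards [hpos] with t ht s
  refine ⟨ht s, ?_⟩
  simp only [AffineMap.lineMap_apply_ring', sum_add_distrib, ← mul_sum, sum_sub_distrib, hπ' s,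
    (hπ s).2, sub_self, mul_zero, zero_add]

variable [Fintype S] [Fintype A]

/-- The expectation `E_{(s,a) ∼ ρ × π}[g(s,a)]`. -/
def policyMean (ρ : S → ℝ) (π g : S → A → ℝ) : ℝ :=
  ∑ s, ρ s * ∑ a, π s a * g s a

lemma policyMean_nonneg {ρ : S → ℝ} {π g : S → A → ℝ} (hρ : ∀ s, 0 ≤ ρ s)
    (hπ : ∀ s a, 0 ≤ π s a) (hg : ∀ s a, 0 ≤ g s a) : 0 ≤ policyMean ρ π g :=
  sum_nonneg fun s _ => mul_nonneg (hρ s) (sum_nonneg fun a _ => mul_nonneg (hπ s a) (hg s a))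

lemma policyMean_mono {ρ : S → ℝ} {π g h : S → A → ℝ} (hρ : ∀ s, 0 ≤ ρ s)
    (hπ : ∀ s a, 0 ≤ π s a) (hgh : ∀ s a, g s a ≤ h s a) :
    policyMean ρ π g ≤ policyMean ρ π h :=
  sum_le_sum fun s _ => mul_le_mul_of_nonneg_left
    (sum_le_sum fun a _ => mul_le_mul_of_nonneg_left (hgh s a) (hπ s a)) (hρ s)

lemma policyMean_const_mul (ρ : S → ℝ) (π g : S → A → ℝ) (c : ℝ) :
    policyMean ρ π (fun s a => c * g s a) = c * policyMean ρ π g := by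
  simp only [policyMean, mul_left_comm _ c, ← mul_sum]

lemma hasDerivAt_JFKL_lineMap (η : ℝ) (ρ : S → ℝ) {pref π : S → A → ℝ} (f π' : S → A → ℝ)
    (hpref : ∀ s a, pref s a ≠ 0) (hπ : ∀ s a, π s a ≠ 0) :
    HasDerivAt
      (fun t : ℝ => JFKL η ρ pref f fun s a => AffineMap.lineMap (π s a) (π' s a) t)
      (∑ s, ρ s * ((∑ a, f s a * (π' s a - π s a)) -
        η⁻¹ * ∑ a, pref s a * (1 - π' s a / π s a))) 0 := by
  refine HasDerivAt.fun_sum fun s _ => (HasDerivAt.sub ?_ ?_).const_mul _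
  · exact HasDerivAt.fun_sum fun a _ => AffineMap.hasDerivAt_lineMap.const_mul _
  · exact (HasDerivAt.fun_sum fun a _ =>
      (hasDerivAt_log_div_lineMap (hpref s a) (hπ s a)).const_mul _).const_mul _

variable {η : ℝ} {ρ : S → ℝ} {pref f π π' : S → A → ℝ}

lemma IsPolicyMax.sum_first_variation_eq_zero (hpref : ∀ s a, pref s a ≠ 0)
    (hmax : IsPolicyMax η ρ pref f π) (hπ' : ∀ s, ∑ a, π' s a = 1) :
    ∑ s, ρ s * ((∑ a, f s a * (π' s a - π s a)) -
      η⁻¹ * ∑ a, pref s a * (1 - π' s a / π s a)) = 0 := by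
  have hπ : IsFullSupportPolicy π := hmax.1
  have hlocal : IsLocalMax
      (fun t : ℝ => JFKL η ρ pref f fun s a => AffineMap.lineMap (π s a) (π' s a) t) 0 := by
    filter_upwards [hπ.eventually_lineMap hπ'] with t ht
    simpa only [AffineMap.lineMap_apply_zero] using hmax.2 _ ht
  exact hlocal.hasDerivAt_eq_zero
    (hasDerivAt_JFKL_lineMap η ρ f π' hpref fun s a => ((hπ s).1 a).ne')

lemma IsPolicyMax.JFKL_sub_JFKL_eq_neg_itakuraSaito (hpref : ∀ s a, pref s a ≠ 0)
    (hmax : IsPolicyMax η ρ pref f π) (hπ' : IsFullSupportPolicy π') :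
    JFKL η ρ pref f π' - JFKL η ρ pref f π =
      -(η⁻¹ * policyMean ρ pref fun s a => itakuraSaito (π' s a) (π s a)) := by
  rw [← sub_zero (JFKL η ρ pref f π' - _),
    ← hmax.sum_first_variation_eq_zero hpref fun s => (hπ' s).2]
  simp only [JFKL, policyMean, itakuraSaito, mul_sum, ← sum_sub_distrib, ← sum_neg_distrib]
  refine sum_congr rfl fun s _ => sum_congr rfl fun a _ => ?_
  have hx := ((hπ' s).1 a).ne'
  have hy := ((hmax.1 s).1 a).ne'
  rw [Real.log_div (hpref s a) hx, Real.log_div (hpref s a) hy, Real.log_div hx hy]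
  ring

lemma JFKL_eq_add_policyMean (η : ℝ) (ρ : S → ℝ) (pref r f π : S → A → ℝ) :
    JFKL η ρ pref r π = JFKL η ρ pref f π + policyMean ρ π fun s a => r s a - f s a := by
  have hsplit : ∀ s, ∑ a, r s a * π s a =
      ∑ a, f s a * π s a + ∑ a, π s a * (r s a - f s a) := fun s => by
    rw [← sum_add_distrib]
    exact sum_congr rfl fun a _ => by ring
  simp only [JFKL, policyMean, hsplit, add_sub_right_comm, mul_add, sum_add_distrib]

lemma IsPolicyMax.JFKL_sub_JFKL_of_reward (hpref : ∀ s a, pref s a ≠ 0)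
    (hmax : IsPolicyMax η ρ pref f π) (hπ' : IsFullSupportPolicy π') (r : S → A → ℝ) :
    JFKL η ρ pref r π' - JFKL η ρ pref r π =
      ∑ s, ρ s * ∑ a, ((r s a - f s a) * (π' s a - π s a) -
        η⁻¹ * (pref s a * itakuraSaito (π' s a) (π s a))) := by
  have hloss := hmax.JFKL_sub_JFKL_eq_neg_itakuraSaito hpref hπ'
  calc JFKL η ρ pref r π' - JFKL η ρ pref r π
      = (policyMean ρ π' fun s a => r s a - f s a) - (policyMean ρ π fun s a => r s a - f s a) -
          η⁻¹ * policyMean ρ pref fun s a => itakuraSaito (π' s a) (π s a) := by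
        rw [JFKL_eq_add_policyMean η ρ pref r f π', JFKL_eq_add_policyMean η ρ pref r f π]
        linarith
    _ = _ := by
        simp only [policyMean, mul_sum, ← sum_sub_distrib]
        exact sum_congr rfl fun s _ => sum_congr rfl fun a _ => by ring

theorem IsPolicyMax.JFKL_sub_JFKL_le_of_le {r : S → A → ℝ} (hη : 0 < η) (hρ : ∀ s, 0 ≤ ρ s)
    (hpref : ∀ s a, 0 < pref s a) (hmax : IsPolicyMax η ρ pref f π)
    (hπ' : IsFullSupportPolicy π') (hfr : ∀ s a, f s a ≤ r s a) :
    JFKL η ρ pref r π' - JFKL η ρ pref r π ≤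
      η / 2 * concentrability pref π' * policyMean ρ π' fun s a => (r s a - f s a) ^ 2 := by
  have hterm : ∀ s a,
      (r s a - f s a) * (π' s a - π s a) - η⁻¹ * (pref s a * itakuraSaito (π' s a) (π s a)) ≤
        η / 2 * concentrability pref π' * (π' s a * (r s a - f s a) ^ 2) := by
    intro s a
    have hx := (hπ' s).1 a
    refine (mul_sub_sub_itakuraSaito_le hη (hpref s a) (sub_nonneg.mpr (hfr s a)) hx
      ((hmax.1 s).1 a)).trans ?_
    gcongr
    exact div_le_concentrability pref π' s a
  calc JFKL η ρ pref r π' - JFKL η ρ pref r π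
      = _ := hmax.JFKL_sub_JFKL_of_reward (fun s a => (hpref s a).ne') hπ' r
    _ ≤ ∑ s, ρ s * ∑ a, η / 2 * concentrability pref π' * (π' s a * (r s a - f s a) ^ 2) :=
        sum_le_sum fun s _ =>
          mul_le_mul_of_nonneg_left (sum_le_sum fun a _ => hterm s a) (hρ s)
    _ = _ := by simp only [policyMean, ← mul_sum, mul_left_comm (ρ _)]

lemma mul_policyMean_sq_mul_sqrt_le {D : S → A → ℝ} (β : ℝ) (hη : 0 ≤ η) (hρ : ∀ s, 0 ≤ ρ s)
    (hpref : ∀ s a, 0 ≤ pref s a) (hπ : ∀ s a, 0 ≤ π s a) (hD : ∀ s a, 0 ≤ D s a) :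
    2 * η * concentrability pref π * (policyMean ρ π fun s a => (β * Real.sqrt (D s a)) ^ 2) ≤
      8 * η * concentrability pref π * β ^ 2 * policyMean ρ π D := by
  have hC := concentrability_nonneg hpref hπ
  have hmean := policyMean_nonneg hρ hπ hD
  simp only [mul_pow, Real.sq_sqrt (hD _ _), policyMean_const_mul, ← mul_assoc]
  gcongr
  norm_num

end Policies

theorem stmt9_general {S A : Type*} [Fintype S] [Fintype A] {η : ℝ} (hη : 0 < η)
    {ρ : S → ℝ} (hρ : ∀ s, 0 ≤ ρ s) {pref r fhat Γ π πhat : S → A → ℝ}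
    (hpref : ∀ s a, 0 < pref s a) (herr : ∀ s a, |fhat s a - r s a| ≤ Γ s a)
    (hπ : IsFullSupportPolicy π)
    (hhat : IsPolicyMax η ρ pref (fun s a => fhat s a - Γ s a) πhat) :
    (∀ s a, fhat s a - Γ s a ≤ r s a) ∧
      JFKL η ρ pref r π - JFKL η ρ pref r πhat ≤
        2 * η * concentrability pref π * policyMean ρ π fun s a => Γ s a ^ 2 := by
  have hle : ∀ s a, fhat s a - Γ s a ≤ r s a := fun s a =>
    sub_le_comm.mp (abs_le.mp (herr s a)).2
  have hsq : ∀ s a, (r s a - (fhat s a - Γ s a)) ^ 2 ≤ 4 * Γ s a ^ 2 := fun s a => by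
    have hgap : r s a - (fhat s a - Γ s a) ≤ 2 * Γ s a := by linarith [(abs_le.mp (herr s a)).1]
    calc (r s a - (fhat s a - Γ s a)) ^ 2
      _ ≤ (2 * Γ s a) ^ 2 := pow_le_pow_left₀ (sub_nonneg.mpr (hle s a)) hgap 2
      _ = 4 * Γ s a ^ 2 := by ring
  have hπ0 : ∀ s a, 0 ≤ π s a := fun s a => ((hπ s).1 a).le
  have hC : 0 ≤ concentrability pref π := concentrability_nonneg (fun s a => (hpref s a).le) hπ0
  refine ⟨hle, (hhat.JFKL_sub_JFKL_le_of_le hη hρ hpref hπ hle).trans ?_⟩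
  calc _ ≤ η / 2 * concentrability pref π * policyMean ρ π fun s a => 4 * Γ s a ^ 2 := by
        gcongr
        exact policyMean_mono hρ hπ0 hsq
    _ = _ := by
        rw [policyMean_const_mul]
        ring

/-- Deterministic analysis of `FKL-PCB` with function approximation:
if `|f̂ - r| ≤ Γ := β D_𝒢(·; π^ref)` pointwise (where `D²_𝒢` is the `D²`-divergence of
the class `𝒢 ∋ r, f̂` with respect to `ρ × π^ref`) and `π̂` maximizes the pessimistic
forward-KL-regularized objective with reward `f_p = f̂ - Γ`, then `f_p ≤ r` pointwise
and `SubOpt_FKL(π̂) ≤ 8 η C^{π*} β² D²_{π*}`, where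
`D²_{π*} = E_{(s,a)∼ρ×π*}[D²_𝒢((s,a); π^ref)]` and
`C^{π*} = sup_{s,a} π*(a|s)/π^ref(a|s)`. -/
theorem stmt9 {S A : Type*} [Fintype S] [Fintype A] [Nonempty S] [Nonempty A]
    (η β : ℝ) (hη : 0 < η) (hβ : 0 < β)
    (ρ : S → ℝ) (hρ0 : ∀ s, 0 ≤ ρ s) (hρ1 : ∑ s, ρ s = 1)
    (pref : S → A → ℝ) (hpref : ∀ s a, 0 < pref s a) (hpref1 : ∀ s, ∑ a, pref s a = 1)
    (G : Set (S → A → ℝ))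
    (r : S → A → ℝ) (hr01 : ∀ s a, r s a ∈ Set.Icc (0 : ℝ) 1) (hrG : r ∈ G)
    (fhat : S → A → ℝ) (hfG : fhat ∈ G)
    (D2 : S → A → ℝ)
    (hD2 : ∀ s a, IsLUB
      {x : ℝ | ∃ g ∈ G, ∃ h ∈ G,
        x = (g s a - h s a) ^ 2 /
          ∑ s', ρ s' * ∑ a', pref s' a' * (g s' a' - h s' a') ^ 2} (D2 s a))
    (herr : ∀ s a, |fhat s a - r s a| ≤ β * Real.sqrt (D2 s a))
    (πstar : S → A → ℝ) (hstar : IsPolicyMax η ρ pref r πstar)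
    (πhat : S → A → ℝ)
    (hhat : IsPolicyMax η ρ pref
      (fun s a => fhat s a - β * Real.sqrt (D2 s a)) πhat) :
    (∀ s a, fhat s a - β * Real.sqrt (D2 s a) ≤ r s a) ∧
    JFKL η ρ pref r πstar - JFKL η ρ pref r πhat ≤
      8 * η * (⨆ p : S × A, πstar p.1 p.2 / pref p.1 p.2) * β ^ 2 *
        ∑ s, ρ s * ∑ a, πstar s a * D2 s a := by
  have hD2_nonneg : ∀ s a, 0 ≤ D2 s a := fun s a => (hD2 s a).1 ⟨r, hrG, r, hrG, by simp⟩
  exact (stmt9_general hη hρ0 hpref herr hstar.1 hhat).imp_right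
    (·.trans (mul_policyMean_sq_mul_sqrt_le β hη.le hρ0 (fun s a => (hpref s a).le)
      (fun s a => ((hstar.1 s).1 a).le) hD2_nonneg))
end

section
/- For every C ≥ 2 and every η ≥ 2, the following three-armed linear bandit instance satisfies C^{π*} ≥ C/2 and D²_{π*} ≤ 16. The instance: arms a_1, a_2, a_3 with feature vectors φ(a_1) = (1,0), φ(a_2) = (0,1), φ(a_3) = (1,1) in ℝ²; reference policy π^ref(a_1) = π^ref(a_2) = 1/2 − 1/(2C) and π^ref(a_3) = 1/C; true parameter θ* = (1,1); function class 𝒢 = { a ↦ ⟨θ, φ(a)⟩ : ‖θ‖₂ ≤ √2 }. -/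
open Finset

/-!
Perturbing a full-support maximizer `p` of `J` inside the simplex shows that
`g a + η⁻¹ * (pref a / p a)` is the same for all arms. In the instance, arms `a₁` and `a₂` are worse
than `a₃` by a reward gap of `1`, so `π* ≤ π^ref / η` on them. Hence `π*` puts all but at most
`(1 - 1/C) / η` of its mass on `a₃`, which `π^ref` plays with probability only `1 / C`.

By Cauchy–Schwarz, `D²(a; π^ref) ≤ ∑ b, w b ^ 2 / π^ref b` whenever `φ a = ∑ b, w b • φ b`.
The trivial representation of `a₁` and `a₂` gives `D² ≤ 1 / π^ref`, so each contributes at most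
`1 / η` to `D²_{π*}`, while `φ a₃ = φ a₁ + φ a₂` lets `π^ref` explore `a₃` through the other two
arms: its `D²` is at most `4` however large `C` is.
-/

open scoped Topology

section ForwardKL

variable {A : Type*} [Fintype A] {η : ℝ} {pref g p : A → ℝ}

theorem hasDerivAt_mul_log_div (c : ℝ) {x : ℝ} (hx : x ≠ 0) :
    HasDerivAt (fun y => c * Real.log (c / y)) (-(c / x)) x := by
  rcases eq_or_ne c 0 with rfl | hc
  · simpa only [zero_mul, zero_div, neg_zero] using hasDerivAt_const x (0 : ℝ)
  · have hinv : HasDerivAt (fun y => c / y) (c * -(x ^ 2)⁻¹) x := by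
      simpa only [div_eq_mul_inv] using (hasDerivAt_inv hx).const_mul c
    refine ((hinv.log (div_ne_zero hc hx)).const_mul c).congr_deriv ?_
    field_simp

theorem hasDerivAt_J_line (hp : ∀ a, p a ≠ 0) (d : A → ℝ) :
    HasDerivAt (fun t : ℝ => J η pref g (fun a => p a + t * d a))
      (∑ a, (g a + η⁻¹ * (pref a / p a)) * d a) 0 := by
  have hline (a : A) : HasDerivAt (fun t : ℝ => p a + t * d a) (d a) 0 :=
    (hasDerivAt_mul_const (d a)).const_add (p a)
  have hreward : HasDerivAt (fun t : ℝ => ∑ a, g a * (p a + t * d a)) (∑ a, g a * d a) 0 :=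
    HasDerivAt.fun_sum fun a _ => (hline a).const_mul (g a)
  have hlog (a : A) :=
    (hasDerivAt_mul_log_div (pref a) (hp a)).comp_of_eq (0 : ℝ) (hline a) (by ring)
  have hkl : HasDerivAt
      (fun t : ℝ => ∑ a, pref a * Real.log (pref a / (p a + t * d a)))
      (∑ a, -(pref a / p a) * d a) 0 :=
    HasDerivAt.fun_sum fun a _ => hlog a
  refine (hreward.sub (hkl.const_mul η⁻¹)).congr_deriv ?_
  rw [mul_sum, ← sum_sub_distrib]
  exact sum_congr rfl fun a _ => by ring

namespace IsMaximizer

theorem sum_gradient_mul_eq_zero (h : IsMaximizer η pref g p) {d : A → ℝ} (hd : ∑ a, d a = 0) :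
    ∑ a, (g a + η⁻¹ * (pref a / p a)) * d a = 0 := by
  obtain ⟨-, hsum, hpos, hmax⟩ := h
  have hpos_near : ∀ᶠ t : ℝ in 𝓝 0, ∀ a, 0 < p a + t * d a :=
    Filter.eventually_all.2 fun a =>
      (Continuous.tendsto' (by fun_prop) 0 (p a) (by ring)).eventually_const_lt (hpos a)
  have hlocal : IsLocalMax (fun t : ℝ => J η pref g (fun a => p a + t * d a)) 0 := by
    filter_upwards [hpos_near] with t ht
    simpa only [zero_mul, add_zero] using
      hmax _ (fun a => (ht a).le) (by rw [sum_add_distrib, ← mul_sum, hsum, hd]; ring) ht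
  exact hlocal.hasDerivAt_eq_zero (hasDerivAt_J_line (fun a => (hpos a).ne') d)

theorem gradient_eq (h : IsMaximizer η pref g p) (a b : A) :
    g a + η⁻¹ * (pref a / p a) = g b + η⁻¹ * (pref b / p b) := by
  classical
  have hmove := h.sum_gradient_mul_eq_zero (d := Pi.single a 1 - Pi.single b 1) (by
    simp only [Pi.sub_apply, sum_sub_distrib, sum_pi_single', mem_univ, if_true, sub_self])
  simpa [mul_sub, Pi.single_apply, sub_eq_zero] using hmove

theorem div_le_inv_mul_gap (h : IsMaximizer η pref g p) (hη : 0 < η) {a b : A}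
    (hb : 0 ≤ pref b) (hab : g a < g b) : p a / pref a ≤ (η * (g b - g a))⁻¹ := by
  have hgap : g b - g a ≤ η⁻¹ * (pref a / p a) := by
    have hb' : 0 ≤ η⁻¹ * (pref b / p b) :=
      mul_nonneg (inv_nonneg.2 hη.le) (div_nonneg hb (h.1 b))
    linarith only [h.gradient_eq a b, hb']
  rw [← inv_div]
  exact inv_anti₀ (mul_pos hη (sub_pos.2 hab)) ((le_inv_mul_iff₀ hη).1 hgap)

end IsMaximizer

end ForwardKL

section D2Divergence

variable {A K : Type*} [Fintype A] [Fintype K]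

/-- The quotients whose supremum is `D²_𝒢(a; π^ref)`, for the linear function class
`𝒢 = {a ↦ ⟨θ, φ a⟩ : θ ∈ Θ}`. A difference with vanishing second moment under `π^ref`
contributes the value `0`. -/
def d2Quotients (Θ : Set (K → ℝ)) (φ : A → K → ℝ) (pref : A → ℝ) (a : A) : Set ℝ :=
  {x | ∃ θ θ' : K → ℝ, θ ∈ Θ ∧ θ' ∈ Θ ∧
    x = (∑ k, (θ k - θ' k) * φ a k) ^ 2 / ∑ b, pref b * (∑ k, (θ k - θ' k) * φ b k) ^ 2}

variable {Θ : Set (K → ℝ)} {φ : A → K → ℝ} {pref : A → ℝ} {a : A}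

theorem sum_sq_div_mem_upperBounds_d2Quotients (hpref : ∀ b, 0 < pref b) {w : A → ℝ}
    (hw : ∀ k, φ a k = ∑ b, w b * φ b k) :
    ∑ b, w b ^ 2 / pref b ∈ upperBounds (d2Quotients Θ φ pref a) := by
  rintro _ ⟨θ, θ', -, -, rfl⟩
  have hvalue : ∑ k, (θ k - θ' k) * φ a k = ∑ b, w b * ∑ k, (θ k - θ' k) * φ b k := by
    simp only [hw, mul_sum]
    rw [sum_comm]
    exact sum_congr rfl fun b _ => sum_congr rfl fun k _ => by ring
  have hweight (b : A) : 0 ≤ w b ^ 2 / pref b := div_nonneg (sq_nonneg _) (hpref b).le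
  have hmoment (b : A) : 0 ≤ pref b * (∑ k, (θ k - θ' k) * φ b k) ^ 2 :=
    mul_nonneg (hpref b).le (sq_nonneg _)
  refine div_le_of_le_mul₀ (sum_nonneg fun b _ => hmoment b) (sum_nonneg fun b _ => hweight b) ?_
  rw [hvalue]
  refine sum_sq_le_sum_mul_sum_of_sq_le_mul _ (fun b _ => hweight b) (fun b _ => hmoment b) ?_
  intro b _
  rw [mul_pow, ← mul_assoc, div_mul_cancel₀ _ (hpref b).ne']

theorem inv_mem_upperBounds_d2Quotients (hpref : ∀ b, 0 < pref b) :
    (pref a)⁻¹ ∈ upperBounds (d2Quotients Θ φ pref a) := by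
  classical
  have h := sum_sq_div_mem_upperBounds_d2Quotients (Θ := Θ) (φ := φ) (a := a)
    (w := Pi.single a 1) hpref (by simp [Pi.single_apply])
  simpa [Pi.single_apply, ite_div] using h

end D2Divergence

namespace ThreeArm

/-- The feature map `φ` of the three-armed instance. Arms `a₁, a₂, a₃` are `0, 1, 2 : Fin 3`. -/
def feature : Fin 3 → Fin 2 → ℝ := ![![1, 0], ![0, 1], ![1, 1]]

/-- The reference policy `π^ref` of the three-armed instance with parameter `C`. -/
noncomputable def refPolicy (C : ℝ) : Fin 3 → ℝ :=
  ![1 / 2 - 1 / (2 * C), 1 / 2 - 1 / (2 * C), 1 / C]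

/-- The reward `a ↦ ⟨θ*, φ(a)⟩` of the three-armed instance, with `θ* = (1, 1)`. -/
def reward (i : Fin 3) : ℝ := ∑ k, (![1, 1] : Fin 2 → ℝ) k * feature i k

theorem reward_two_sub {i : Fin 3} (hi : i ≠ 2) : reward 2 - reward i = 1 := by
  fin_cases i <;> simp [reward, feature] at hi ⊢

variable {C η : ℝ} {Θ : Set (Fin 2 → ℝ)} {πstar D2 : Fin 3 → ℝ}

theorem refPolicy_pos (hC : 1 < C) (i : Fin 3) : 0 < refPolicy C i := by
  have hC0 : 0 < C := one_pos.trans hC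
  have hp : 0 < 1 / 2 - 1 / (2 * C) := by
    rw [sub_pos]
    exact one_div_lt_one_div_of_lt two_pos (by linarith)
  fin_cases i
  · exact hp
  · exact hp
  · exact one_div_pos.2 hC0

theorem div_refPolicy_le (hC : 1 < C) (hη : 0 < η)
    (hstar : IsMaximizer η (refPolicy C) reward πstar) {i : Fin 3} (hi : i ≠ 2) :
    πstar i / refPolicy C i ≤ η⁻¹ := by
  have h := hstar.div_le_inv_mul_gap hη (refPolicy_pos hC 2).le
    (sub_pos.1 ((reward_two_sub hi).symm ▸ one_pos))
  rwa [reward_two_sub hi, mul_one] at h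

theorem le_div_refPolicy_two (hC : 1 < C) (hη : 0 < η)
    (hstar : IsMaximizer η (refPolicy C) reward πstar) :
    C - (C - 1) / η ≤ πstar 2 / refPolicy C 2 := by
  have : 0 < C := one_pos.trans hC
  have hle {i : Fin 3} (hi : i ≠ 2) : πstar i ≤ η⁻¹ * refPolicy C i :=
    (div_le_iff₀ (refPolicy_pos hC i)).1 (div_refPolicy_le hC hη hstar hi)
  have hsum : πstar 0 + πstar 1 + πstar 2 = 1 := by
    rw [← Fin.sum_univ_three]
    exact hstar.2.1
  have hmass : 1 - η⁻¹ * (refPolicy C 0 + refPolicy C 1) ≤ πstar 2 := by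
    linarith only [hsum, hle (i := 0) (by decide), hle (i := 1) (by decide)]
  calc C - (C - 1) / η
      = (1 - η⁻¹ * (refPolicy C 0 + refPolicy C 1)) / refPolicy C 2 := by
        simp only [refPolicy, Matrix.cons_val]
        field_simp
        ring
    _ ≤ πstar 2 / refPolicy C 2 := div_le_div_of_nonneg_right hmass (refPolicy_pos hC 2).le

theorem four_mem_upperBounds_d2Quotients_two (hC : 1 < C) :
    4 ∈ upperBounds (d2Quotients Θ feature (refPolicy C) 2) := by
  have : 0 < C := one_pos.trans hC
  have hC1 : C - 1 ≠ 0 := (sub_pos.2 hC).ne'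
  -- `φ a₃ = t (φ a₁ + φ a₂) + (1 - t) φ a₃` for every `t`; with `t = 1 - 1 / C` the weights are
  -- `2 π^ref`, `2 π^ref` and `π^ref`, so `∑ w² / π^ref` is bounded uniformly in `C > 1`.
  let w : Fin 3 → ℝ := ![1 - 1 / C, 1 - 1 / C, 1 / C]
  have hw (k : Fin 2) : feature 2 k = ∑ b, w b * feature b k := by
    fin_cases k <;> simp [w, feature, Fin.sum_univ_three]
  have hsum : ∑ b, w b ^ 2 / refPolicy C b = 4 - 3 / C := by
    simp only [Fin.sum_univ_three, w, refPolicy, Matrix.cons_val]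
    have hp : 1 / 2 - 1 / (2 * C) = (C - 1) / (2 * C) := by field_simp
    rw [hp]
    field_simp
    ring
  have hbound := sum_sq_div_mem_upperBounds_d2Quotients (Θ := Θ) (refPolicy_pos hC) hw
  rw [hsum] at hbound
  exact upperBounds_mono_mem (sub_le_self 4 (by positivity)) hbound

theorem sum_mul_d2_le (hC : 1 < C) (hη : 0 < η)
    (hstar : IsMaximizer η (refPolicy C) reward πstar)
    (hD2 : ∀ i, IsLUB (d2Quotients Θ feature (refPolicy C) i) (D2 i)) :
    ∑ i, πstar i * D2 i ≤ 4 + 2 / η := by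
  have hnonneg := hstar.1
  have hother {i : Fin 3} (hi : i ≠ 2) : πstar i * D2 i ≤ η⁻¹ :=
    calc πstar i * D2 i ≤ πstar i * (refPolicy C i)⁻¹ := mul_le_mul_of_nonneg_left
          ((hD2 i).2 (inv_mem_upperBounds_d2Quotients (refPolicy_pos hC))) (hnonneg i)
      _ ≤ η⁻¹ := div_refPolicy_le hC hη hstar hi
  have hbest : πstar 2 * D2 2 ≤ 4 :=
    calc πstar 2 * D2 2 ≤ πstar 2 * 4 := mul_le_mul_of_nonneg_left
          ((hD2 2).2 (four_mem_upperBounds_d2Quotients_two hC)) (hnonneg 2)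
      _ ≤ 1 * 4 := by
        gcongr
        exact hstar.2.1 ▸ single_le_sum (fun i _ => hnonneg i) (mem_univ 2)
      _ = 4 := one_mul 4
  rw [Fin.sum_univ_three, div_eq_mul_inv]
  linarith only [hother (i := 0) (by decide), hother (i := 1) (by decide), hbest]

end ThreeArm

open ThreeArm in
theorem stmt13_general {C η : ℝ} (hC : 1 < C) (hη : 0 < η) {Θ : Set (Fin 2 → ℝ)}
    {πstar D2 : Fin 3 → ℝ} (hstar : IsMaximizer η (refPolicy C) reward πstar)
    (hD2 : ∀ i, IsLUB (d2Quotients Θ feature (refPolicy C) i) (D2 i)) :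
    C - (C - 1) / η ≤ πstar 2 / refPolicy C 2 ∧ ∑ i, πstar i * D2 i ≤ 4 + 2 / η :=
  ⟨le_div_refPolicy_two hC hη hstar, sum_mul_d2_le hC hη hstar hD2⟩

/-- A three-armed linear bandit instance with features
`φ(a₁) = (1,0)`, `φ(a₂) = (0,1)`, `φ(a₃) = (1,1)`, reference policy
`π^ref(a₁) = π^ref(a₂) = 1/2 - 1/(2C)`, `π^ref(a₃) = 1/C`, true parameter
`θ* = (1,1)`, and function class `{a ↦ ⟨θ, φ(a)⟩ : ‖θ‖₂ ≤ √2}`, for which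
`C^{π*} ≥ C/2` while `D²_{π*} ≤ 16`. -/
theorem stmt13 (C η : ℝ) (hC : 2 ≤ C) (hη : 2 ≤ η)
    (φ : Fin 3 → Fin 2 → ℝ) (hφ : φ = ![![1, 0], ![0, 1], ![1, 1]])
    (πref : Fin 3 → ℝ)
    (hπref : πref = ![1 / 2 - 1 / (2 * C), 1 / 2 - 1 / (2 * C), 1 / C])
    (θstar : Fin 2 → ℝ) (hθ : θstar = ![1, 1])
    (r : Fin 3 → ℝ) (hr : ∀ i, r i = ∑ k, θstar k * φ i k)
    (πstar : Fin 3 → ℝ) (hstar : IsMaximizer η πref r πstar)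
    (D2 : Fin 3 → ℝ)
    (hD2 : ∀ i, IsLUB
      {x : ℝ | ∃ θ θ' : Fin 2 → ℝ,
        (∑ k, (θ k) ^ 2 ≤ 2) ∧ (∑ k, (θ' k) ^ 2 ≤ 2) ∧
        x = (∑ k, (θ k - θ' k) * φ i k) ^ 2 /
          ∑ j, πref j * (∑ k, (θ k - θ' k) * φ j k) ^ 2} (D2 i)) :
    (∃ i, C / 2 ≤ πstar i / πref i) ∧ ∑ i, πstar i * D2 i ≤ 16 := by
  subst hφ hπref hθ
  obtain rfl : r = ThreeArm.reward := funext hr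
  obtain ⟨hratio, hdiv⟩ := stmt13_general (Θ := {θ | ∑ k, θ k ^ 2 ≤ 2})
    (by linarith) (by linarith) hstar hD2
  have hC_div : (C - 1) / η ≤ (C - 1) / 2 := div_le_div_of_nonneg_left (by linarith) two_pos hη
  have hη_div : 2 / η ≤ 1 := div_le_one_of_le₀ hη (by linarith)
  exact ⟨⟨2, le_trans (by linarith) hratio⟩, by linarith⟩
end

section
/- Under the stated hypotheses on h, for all r, r' ∈ ℝ^𝒜 the Bregman divergences of h* and of h satisfy the exact identity D_{h*}(r, r') = D_h(π_{r'}, π_r), where D_f(x, y) = f(x) − f(y) − ⟨∇f(y), x − y⟩; here ∇h*(r') = π_{r'} and ∇h(π_r) is the gradient of (any continuously differentiable extension of) h at π_r, whose pairing with differences of probability vectors is well defined. -/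
open Finset

/-- The relative interior of the probability simplex on a finite set `A`:
the full-support distributions. -/
def riSimplex (A : Type*) [Fintype A] : Set (A → ℝ) :=
  {p | (∀ a, 0 < p a) ∧ ∑ a, p a = 1}

/-- The Bregman divergence `D_f(x, y) = f(x) - f(y) - ⟨∇f(y), x - y⟩`. The gradient is a separate
argument `f'`, since `∇f` may only be determined along a subspace of directions. -/
def bregmanDiv {E : Type*} [AddCommGroup E] [Module ℝ E]
    (f : E → ℝ) (f' : E → Module.Dual ℝ E) (x y : E) : ℝ :=
  f x - f y - f' y (x - y)

/-- The convex conjugate `f*(r) = sup_{q ∈ s} ⟨r, q⟩ - f(q)` of `f` constrained to `s`, for a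
pairing `B` of reward vectors with points. Being a real supremum, it takes the value `0` where the
true supremum is infinite. -/
noncomputable def constrainedConj {E F : Type*} [AddCommGroup E] [Module ℝ E] [AddCommGroup F]
    [Module ℝ F] (B : F →ₗ[ℝ] Module.Dual ℝ E) (f : E → ℝ) (s : Set E) (r : F) : ℝ :=
  ⨆ q : s, (B r q - f q)

/-- A set is relatively algebraically open if it meets the line through any two of its points in an
open subset of that line. For convex sets this means being equal to the relative algebraic interior;
it replaces the relative interior where `E` carries no topology. -/
def IsRelAlgOpen {E : Type*} [AddCommGroup E] [Module ℝ E] (s : Set E) : Prop :=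
  ∀ p ∈ s, ∀ q ∈ s, ∀ᶠ t : ℝ in nhds 0, p + t • (q - p) ∈ s

section Conjugate

variable {E F : Type*} [AddCommGroup E] [Module ℝ E] [AddCommGroup F] [Module ℝ F]
  {s : Set E} {f : E → ℝ} {p : E}

theorem constrainedConj_eq_of_isMaxOn {B : F →ₗ[ℝ] Module.Dual ℝ E} {r : F} (hp : p ∈ s)
    (hmax : IsMaxOn (fun q => B r q - f q) s p) :
    constrainedConj B f s r = B r p - f p :=
  hmax.iSup_eq hp

theorem lineDeriv_eq_of_isMaxOn_sub {ℓ : Module.Dual ℝ E} {v : E} {c : ℝ}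
    (hmax : IsMaxOn (fun q => ℓ q - f q) s p) (hf : HasLineDerivWithinAt ℝ f c s p v)
    (hv : ∀ᶠ t : ℝ in nhds 0, p + t • v ∈ s) : c = ℓ v := by
  have hℓ : HasLineDerivWithinAt ℝ ℓ (ℓ v) s p v := by
    simpa [HasLineDerivWithinAt] using
      (((hasDerivAt_id (0 : ℝ)).mul_const (ℓ v)).const_add (ℓ p)).hasDerivWithinAt
  have hsub : HasLineDerivWithinAt ℝ (fun q => ℓ q - f q) (ℓ v - c) s p v :=
    HasDerivWithinAt.sub hℓ hf
  exact (sub_eq_zero.1 (hmax.hasLineDerivWithinAt_eq_zero hsub hv)).symm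

/-- At the maximizer `π r`, Fermat's rule says that `r` and the gradient of `f` agree on directions
inside `s`. So both divergences equal `f (π r') - f (π r) - ⟨r, π r' - π r⟩`, the terms in `r'`
cancelling on the conjugate side. -/
theorem stmt15_general (B : F →ₗ[ℝ] Module.Dual ℝ E) (hs : IsRelAlgOpen s)
    {f' : E → Module.Dual ℝ E}
    (hf : ∀ p ∈ s, ∀ q ∈ s, HasLineDerivWithinAt ℝ f (f' p (q - p)) s p (q - p))
    {π : F → E} (hπ : ∀ r, π r ∈ s) (hmax : ∀ r, IsMaxOn (fun q => B r q - f q) s (π r))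
    (r r' : F) :
    bregmanDiv (constrainedConj B f s) (fun r => B.flip (π r)) r r' =
      bregmanDiv f f' (π r') (π r) := by
  have hgrad : f' (π r) (π r' - π r) = B r (π r' - π r) :=
    lineDeriv_eq_of_isMaxOn_sub (hmax r) (hf _ (hπ r) _ (hπ r')) (hs _ (hπ r) _ (hπ r'))
  simp only [bregmanDiv, constrainedConj_eq_of_isMaxOn (hπ _) (hmax _), hgrad, map_sub,
    LinearMap.flip_apply]
  ring

end Conjugate

theorem isMaxOn_sub_toReal {X : Type*} {s : Set X} {ℓ : X → ℝ} {h : X → EReal} {x : X}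
    (hx : x ∈ s) (hbot : ∀ y ∈ s, h y ≠ ⊥) (htop : ∀ y ∈ s, h y ≠ ⊤)
    (hmax : IsMaxOn (fun y => (ℓ y : EReal) - h y) s x) :
    IsMaxOn (fun y => ℓ y - (h y).toReal) s x := by
  intro y hy
  have hle : (ℓ y : EReal) - h y ≤ ℓ x - h x := hmax hy
  rw [← EReal.coe_toReal (htop y hy) (hbot y hy), ← EReal.coe_toReal (htop x hx) (hbot x hx)] at hle
  exact_mod_cast hle

theorem isRelAlgOpen_inter_preimage_singleton {E M : Type*} [AddCommGroup E] [Module ℝ E]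
    [TopologicalSpace E] [ContinuousAdd E] [ContinuousSMul ℝ E] [AddCommGroup M] [Module ℝ M]
    {U : Set E} (hU : IsOpen U) (L : E →ₗ[ℝ] M) (c : M) : IsRelAlgOpen (U ∩ L ⁻¹' {c}) := by
  rintro p ⟨hpU, hp : L p = c⟩ q ⟨-, hq : L q = c⟩
  have hcont : Continuous fun t : ℝ => p + t • (q - p) := by fun_prop
  have hU' : ∀ᶠ t : ℝ in nhds 0, p + t • (q - p) ∈ U :=
    hcont.continuousAt.eventually_mem (hU.mem_nhds (by simpa using hpU))
  filter_upwards [hU'] with t ht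
  exact ⟨ht, by simp [hp, hq]⟩

section Simplex

variable {A : Type*} [Fintype A]

theorem riSimplex_subset_stdSimplex : riSimplex A ⊆ stdSimplex ℝ A :=
  fun _ hp => ⟨fun a => (hp.1 a).le, hp.2⟩

theorem bregmanDiv_constrainedConj_dotProductBilin {s : Set (A → ℝ)} {f : (A → ℝ) → ℝ}
    {π : (A → ℝ) → A → ℝ} (hπ : ∀ r, π r ∈ s)
    (hmax : ∀ r, IsMaxOn (fun q => dotProductBilin ℝ ℝ r q - f q) s (π r)) (r r' : A → ℝ) :
    bregmanDiv (constrainedConj (dotProductBilin ℝ ℝ) f s)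
        (fun r => (dotProductBilin ℝ ℝ).flip (π r)) r r' =
      (∑ a, r a * π r a - f (π r)) - (∑ a, r' a * π r' a - f (π r')) -
        ∑ a, π r' a * (r a - r' a) := by
  simp only [bregmanDiv, constrainedConj_eq_of_isMaxOn (hπ _) (hmax _), LinearMap.flip_apply,
    dotProductBilin_apply_apply, dotProduct, Pi.sub_apply, mul_comm]

theorem isRelAlgOpen_riSimplex : IsRelAlgOpen (riSimplex A) := by
  have hopen : IsOpen {p : A → ℝ | ∀ a, 0 < p a} := by
    simpa only [Set.ofPred_forall] using
      isOpen_iInter_of_finite fun a => isOpen_lt continuous_const (continuous_apply a)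
  simpa [riSimplex, Set.inter_def, dotProduct] using
    isRelAlgOpen_inter_preimage_singleton hopen (dotProductBilin ℝ ℝ (1 : A → ℝ)) 1

end Simplex

/-- Under the stated hypotheses on `h`, writing
`h*(r) = ⟨r, π_r⟩ - h(π_r)` for the constrained conjugate (so `∇h*(r') = π_{r'}`), the
Bregman divergences of `h*` and of `h` satisfy the exact identity
`D_{h*}(r, r') = D_h(π_{r'}, π_r)`; here `∇h(π_r)` is the gradient of (any continuously
differentiable extension of) `h` at `π_r`, whose pairing with differences of
probability vectors is well defined. -/
theorem stmt15 {A : Type*} [Fintype A] [Nonempty A]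
    (h : (A → ℝ) → EReal)
    -- `h` is proper (never `-∞`) and finite on the relative interior of the simplex
    (hbot : ∀ p, h p ≠ ⊥)
    (hfin : ∀ p ∈ riSimplex A, h p ≠ ⊤)
    -- `h` is convex on the simplex
    (hconv : ∀ p ∈ stdSimplex ℝ A, ∀ q ∈ stdSimplex ℝ A, ∀ t : ℝ, 0 < t → t < 1 →
      h (fun a => t * p a + (1 - t) * q a) ≤
        ((t : ℝ) : EReal) * h p + (((1 - t) : ℝ) : EReal) * h q)
    -- `h` is strictly convex on the relative interior of the simplex
    (hstrict : ∀ p ∈ riSimplex A, ∀ q ∈ riSimplex A, p ≠ q → ∀ t : ℝ, 0 < t → t < 1 →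
      h (fun a => t * p a + (1 - t) * q a) <
        ((t : ℝ) : EReal) * h p + (((1 - t) : ℝ) : EReal) * h q)
    -- `h` is closed (lower semicontinuous)
    (hclosed : LowerSemicontinuous h)
    -- `h` is continuously differentiable on the relative interior of the simplex
    (grad : (A → ℝ) → ((A → ℝ) →L[ℝ] ℝ))
    (hgradcont : ContinuousOn grad (riSimplex A))
    (hgrad : ∀ p ∈ riSimplex A,
      HasFDerivWithinAt (fun q => (h q).toReal) (grad p) (riSimplex A) p)
    -- for every `r`, the maximizer `π_r` of `⟨r, π⟩ - h(π)` over the simplex exists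
    -- and lies in the relative interior (it is then unique by strict convexity)
    (πr : (A → ℝ) → A → ℝ)
    (hπr : ∀ r, πr r ∈ riSimplex A)
    (hmax : ∀ r : A → ℝ, ∀ q ∈ stdSimplex ℝ A,
      ((∑ a, r a * q a : ℝ) : EReal) - h q ≤
        ((∑ a, r a * πr r a : ℝ) : EReal) - h (πr r))
    :
    ∀ r r' : A → ℝ,
      (∑ a, r a * πr r a - (h (πr r)).toReal) -
        (∑ a, r' a * πr r' a - (h (πr r')).toReal) -
        (∑ a, πr r' a * (r a - r' a)) =
      (h (πr r')).toReal - (h (πr r)).toReal -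
        grad (πr r) (fun a => πr r' a - πr r a) := by
  intro r r'
  have hmax' r : IsMaxOn (fun q => dotProductBilin ℝ ℝ r q - (h q).toReal) (riSimplex A) (πr r) :=
    isMaxOn_sub_toReal (hπr r) (fun p _ => hbot p) hfin
      fun q hq => hmax r q (riSimplex_subset_stdSimplex hq)
  exact (bregmanDiv_constrainedConj_dotProductBilin hπr hmax' r r').symm.trans <|
    stmt15_general _ isRelAlgOpen_riSimplex (f' := fun p => (grad p).toLinearMap)
      (fun p hp q _ => (hgrad p hp).hasLineDerivWithinAt (q - p)) hπr hmax' r r'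
end

section
/- Fix an even integer A = 2K ≥ 2, η > 0, c ∈ (0, 0.25), and signs v_0, …, v_{K−1} ∈ {±1}. Consider the A-armed bandit with uniform reference distribution π^ref = Unif(𝒜) on 𝒜 = {0, 1, …, A−1} and reward function r(2k) = 0.5 − v_k c, r(2k+1) = 0.5 + v_k c for k = 0, …, K−1. Then the unique maximizer π* of the forward-KL-regularized objective is given in closed form by π*(a) = (1 − κ_a ω)/A, where κ_{2k} = v_k, κ_{2k+1} = −v_k, and ω = 2ηc / (1 + √(1 + 4η²c²)). Equivalently, the normalization constant λ from the closed-form characterization satisfies λ − 0.5 = (1 + √(1 + 4η²c²)) / (2η), the same value for every choice of the signs. -/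
open Finset

/-!
Up to a constant, the objective is a sum over the arms of the strictly concave functions
`t ↦ g a * t + η⁻¹ * w a * log t`, where `w = π^ref`. If `p a = η⁻¹ * w a / (l - g a)`, all of them
have slope `l` at `p a`. Summing the tangent line inequalities there, the linear terms
`l * (q a - p a)` cancel for distributions `p` and `q`, so `p` is the unique maximizer as soon as it
sums to one.

For rewards `g a = b - κ a * c` with `κ a = ±1`, put `x = 2ηc` and `s = √(1 + x²)`, so that
`ω = x / (1 + s)`, and take `l = b + (1 + s) / (2η)`, so that `2η(l - g a) = 1 + s + κ a * x`. Since
`ω * x = s - 1`, multiplying this by `1 - κ a * ω` gives `2`, hence `p a = (1 - κ a * ω) * w a`. If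
`κ` has mean zero under `w`, these weights sum to one.
-/

section ClosedForm

/-- The contribution of a single arm, of reference weight `w`, reward `g` and probability `p`, to
the forward-KL-regularized objective `J`. -/
noncomputable def armObjective (η w g p : ℝ) : ℝ :=
  g * p - η⁻¹ * (w * Real.log (w / p))

theorem armObjective_lt_add_mul_sub {η w g p q l : ℝ} (hη : 0 < η) (hw : 0 < w) (hp : 0 < p)
    (hq : 0 < q) (hslope : p * (l - g) = η⁻¹ * w) (hne : q ≠ p) :
    armObjective η w g q < armObjective η w g p + l * (q - p) := by
  have hlog : Real.log q - Real.log p < q / p - 1 := by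
    rw [← Real.log_div hq.ne' hp.ne']
    exact Real.log_lt_sub_one_of_pos (div_pos hq hp) (mt (div_eq_one_iff_eq hp.ne').1 hne)
  have hgap : η⁻¹ * w * (Real.log q - Real.log p) < (l - g) * (q - p) :=
    calc η⁻¹ * w * (Real.log q - Real.log p) < η⁻¹ * w * (q / p - 1) := by gcongr
      _ = (l - g) * (q - p) := by rw [← hslope]; field_simp
  simp only [armObjective, Real.log_div hw.ne' hq.ne', Real.log_div hw.ne' hp.ne']
  linarith

variable {A : Type*} {η l : ℝ} {w g q : A → ℝ}

/-- The weights `a ↦ η⁻¹ π^ref(a) / (l - g a)`, at which every arm's contribution to `J` has the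
same derivative `l`. They form a policy only for the value of `l > max g` that makes them sum to
one. -/
noncomputable def closedFormPolicy (η : ℝ) (w g : A → ℝ) (l : ℝ) (a : A) : ℝ :=
  η⁻¹ * w a / (l - g a)

theorem closedFormPolicy_pos {a : A} (hη : 0 < η) (hw : 0 < w a) (hg : g a < l) :
    0 < closedFormPolicy η w g l a :=
  div_pos (mul_pos (inv_pos.2 hη) hw) (sub_pos.2 hg)

variable [Fintype A]

theorem J_eq_sum_armObjective (η : ℝ) (w g p : A → ℝ) :
    J η w g p = ∑ a, armObjective η (w a) (g a) (p a) := by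
  simp only [J, armObjective, sum_sub_distrib, mul_sum]

theorem J_lt_J_closedFormPolicy (hη : 0 < η) (hw : ∀ a, 0 < w a) (hg : ∀ a, g a < l)
    (hsum : ∑ a, closedFormPolicy η w g l a = 1) (hq : ∀ a, 0 < q a) (hqsum : ∑ a, q a = 1)
    (hne : q ≠ closedFormPolicy η w g l) :
    J η w g q < J η w g (closedFormPolicy η w g l) := by
  set p := closedFormPolicy η w g l
  have hlt (a : A) (ha : q a ≠ p a) : armObjective η (w a) (g a) (q a) <
      armObjective η (w a) (g a) (p a) + l * (q a - p a) :=
    armObjective_lt_add_mul_sub hη (hw a) (closedFormPolicy_pos hη (hw a) (hg a)) (hq a)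
      (div_mul_cancel₀ _ (sub_pos.2 (hg a)).ne') ha
  obtain ⟨b, hb⟩ := Function.ne_iff.1 hne
  calc J η w g q = ∑ a, armObjective η (w a) (g a) (q a) := J_eq_sum_armObjective η w g q
    _ < ∑ a, (armObjective η (w a) (g a) (p a) + l * (q a - p a)) := by
      refine sum_lt_sum (fun a _ ↦ ?_) ⟨b, mem_univ b, hlt b hb⟩
      rcases eq_or_ne (q a) (p a) with ha | ha
      · simp [ha]
      · exact (hlt a ha).le
    _ = J η w g p := by
      rw [sum_add_distrib, ← mul_sum, sum_sub_distrib, hqsum, hsum, sub_self, mul_zero, add_zero,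
        J_eq_sum_armObjective]

theorem isMaximizer_iff_eq_closedFormPolicy (hη : 0 < η) (hw : ∀ a, 0 < w a) (hg : ∀ a, g a < l)
    (hsum : ∑ a, closedFormPolicy η w g l a = 1) :
    IsMaximizer η w g q ↔ q = closedFormPolicy η w g l := by
  have hpos (a : A) := closedFormPolicy_pos hη (hw a) (hg a)
  constructor
  · rintro ⟨-, hqsum, hq, hmax⟩
    by_contra hne
    exact (hmax _ (fun a ↦ (hpos a).le) hsum hpos).not_gt
      (J_lt_J_closedFormPolicy hη hw hg hsum hq hqsum hne)
  · rintro rfl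
    refine ⟨fun a ↦ (hpos a).le, hsum, hpos, fun q _ hqsum hq ↦ ?_⟩
    rcases eq_or_ne q (closedFormPolicy η w g l) with rfl | hne
    · exact le_rfl
    · exact (J_lt_J_closedFormPolicy hη hw hg hsum hq hqsum hne).le

end ClosedForm

section SignedRewards

theorem one_add_sqrt_one_add_sq_add_mul_pos {κ : ℝ} (hκ : κ = 1 ∨ κ = -1) (x : ℝ) :
    0 < 1 + √(1 + x ^ 2) + κ * x := by
  have habs : |x| ≤ √(1 + x ^ 2) := Real.abs_le_sqrt (by linarith)
  rcases hκ with rfl | rfl <;> linarith [neg_abs_le x, le_abs_self x]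

theorem one_sub_mul_div_mul_one_add_sqrt_add_mul {κ : ℝ} (hκ : κ = 1 ∨ κ = -1) (x : ℝ) :
    (1 - κ * (x / (1 + √(1 + x ^ 2)))) * (1 + √(1 + x ^ 2) + κ * x) = 2 := by
  have hs : √(1 + x ^ 2) ^ 2 = 1 + x ^ 2 := Real.sq_sqrt (by positivity)
  have hκ2 : κ ^ 2 = 1 := sq_eq_one_iff.2 hκ
  field_simp
  linear_combination hs - x ^ 2 * hκ2

theorem stmt18_general {A : Type*} [Fintype A] {η : ℝ} (hη : 0 < η) {w : A → ℝ}
    (hw : ∀ a, 0 < w a) (hwsum : ∑ a, w a = 1) {κ : A → ℝ} (hκ : ∀ a, κ a = 1 ∨ κ a = -1)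
    (hκw : ∑ a, κ a * w a = 0) (b c : ℝ) {r : A → ℝ} (hr : ∀ a, r a = b - κ a * c) :
    let s : ℝ := √(1 + 4 * η ^ 2 * c ^ 2)
    let ω : ℝ := 2 * η * c / (1 + s)
    let p : A → ℝ := fun a ↦ (1 - κ a * ω) * w a
    IsMaximizer η w r p ∧ (∀ q, IsMaximizer η w r q → q = p) ∧
      ∀ a, p a = η⁻¹ * w a / (b + (1 + s) / (2 * η) - r a) := by
  intro s ω p
  have hs : s = √(1 + (2 * η * c) ^ 2) := by simp only [s]; ring_nf
  have hgap (a : A) :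
      b + (1 + s) / (2 * η) - r a = (1 + s + κ a * (2 * η * c)) / (2 * η) := by
    rw [hr]; field_simp; ring
  have hgap_pos (a : A) : 0 < b + (1 + s) / (2 * η) - r a := by
    rw [hgap, hs]
    exact div_pos (one_add_sqrt_one_add_sq_add_mul_pos (hκ a) _) (by positivity)
  have hp (a : A) : p a = η⁻¹ * w a / (b + (1 + s) / (2 * η) - r a) := by
    have hmul : (1 - κ a * ω) * (1 + s + κ a * (2 * η * c)) = 2 := by
      simp only [ω, hs, one_sub_mul_div_mul_one_add_sqrt_add_mul (hκ a)]
    rw [eq_div_iff (hgap_pos a).ne', hgap]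
    field_simp
    linear_combination w a * hmul
  have hpsum : ∑ a, p a = 1 :=
    calc ∑ a, p a = ∑ a, (w a - ω * (κ a * w a)) := sum_congr rfl fun a _ ↦ by ring
      _ = 1 := by rw [sum_sub_distrib, ← mul_sum, hwsum, hκw, mul_zero, sub_zero]
  have hp_eq : p = closedFormPolicy η w r (b + (1 + s) / (2 * η)) := funext hp
  have hmax {q : A → ℝ} : IsMaximizer η w r q ↔ q = p := by
    rw [hp_eq] at hpsum ⊢
    exact isMaximizer_iff_eq_closedFormPolicy hη hw (fun a ↦ sub_pos.1 (hgap_pos a)) hpsum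
  exact ⟨hmax.2 rfl, fun q ↦ hmax.1, hp⟩

end SignedRewards

section PairedSign

variable {K : ℕ}

/-- The signs `κ` attached to the `2K` arms by a sign for each pair: `κ_{2k} = v_k` and
`κ_{2k+1} = -v_k`. -/
def pairedSign {M : Type*} [Neg M] (v : Fin K → M) (a : Fin (2 * K)) : M :=
  if (a : ℕ) % 2 = 0 then v ⟨(a : ℕ) / 2, by lia⟩ else -v ⟨(a : ℕ) / 2, by lia⟩

theorem pairedSign_eq_or_eq_neg {M : Type*} [InvolutiveNeg M] {v : Fin K → M} {x : M}
    (hv : ∀ k, v k = x ∨ v k = -x) (a : Fin (2 * K)) :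
    pairedSign v a = x ∨ pairedSign v a = -x := by
  unfold pairedSign
  split_ifs
  · exact hv _
  · rw [neg_inj, neg_eq_iff_eq_neg]
    exact (hv _).symm

theorem sub_pairedSign_mul {R : Type*} [Ring R] (b c : R) (v : Fin K → R) (a : Fin (2 * K)) :
    b - pairedSign v a * c =
      if (a : ℕ) % 2 = 0 then b - v ⟨(a : ℕ) / 2, by lia⟩ * c
      else b + v ⟨(a : ℕ) / 2, by lia⟩ * c := by
  unfold pairedSign
  split_ifs
  · rfl
  · rw [neg_mul, sub_neg_eq_add]

theorem pairedSign_two_mul {M : Type*} [Neg M] (v : Fin K → M) (k : Fin K) :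
    pairedSign v ⟨2 * k, by lia⟩ = v k := by
  simp [pairedSign]

theorem pairedSign_two_mul_add_one {M : Type*} [Neg M] (v : Fin K → M) (k : Fin K) :
    pairedSign v ⟨2 * k + 1, by lia⟩ = -v k := by
  have hdiv : (2 * (k : ℕ) + 1) / 2 = k := by lia
  simp [pairedSign, hdiv]

theorem sum_pairedSign {M : Type*} [AddCommGroup M] (v : Fin K → M) :
    ∑ a, pairedSign v a = 0 := by
  let e : Fin K × Fin 2 ≃ Fin (2 * K) := finProdFinEquiv.trans (finCongr (mul_comm K 2))
  have he0 (k : Fin K) : e (k, 0) = ⟨2 * k, by lia⟩ := Fin.ext (zero_add _)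
  have he1 (k : Fin K) : e (k, 1) = ⟨2 * k + 1, by lia⟩ := Fin.ext (add_comm _ _)
  rw [← e.sum_comp, Fintype.sum_prod_type]
  simp only [Fin.sum_univ_two, he0, he1, pairedSign_two_mul, pairedSign_two_mul_add_one,
    add_neg_cancel, sum_const_zero]

end PairedSign

/-- Closed form of the forward-KL-regularized optimal policy for the
hard instances: for an `A = 2K`-armed bandit with uniform reference policy and rewards
`r(2k) = 1/2 - v_k c`, `r(2k+1) = 1/2 + v_k c` (signs `v_k ∈ {±1}`, `c ∈ (0, 1/4)`),
the unique maximizer is `π*(a) = (1 - κ_a ω)/A` with `κ_{2k} = v_k`, `κ_{2k+1} = -v_k`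
and `ω = 2ηc/(1 + √(1 + 4η²c²))`; equivalently `π*(a) = η⁻¹ A⁻¹/(λ - r(a))` with
`λ - 1/2 = (1 + √(1 + 4η²c²))/(2η)`, the same value for every choice of the signs. -/
theorem stmt18 (K : ℕ) (hK : 1 ≤ K) (η c : ℝ) (hη : 0 < η)
    (hc : c ∈ Set.Ioo (0 : ℝ) (1 / 4))
    (v : Fin K → ℝ) (hv : ∀ k, v k = 1 ∨ v k = -1)
    (r : Fin (2 * K) → ℝ)
    (hrdef : ∀ a : Fin (2 * K),
      r a = if (a : ℕ) % 2 = 0 then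
              1 / 2 - v ⟨(a : ℕ) / 2, by have := a.isLt; omega⟩ * c
            else
              1 / 2 + v ⟨(a : ℕ) / 2, by have := a.isLt; omega⟩ * c) :
    let ω : ℝ := 2 * η * c / (1 + Real.sqrt (1 + 4 * η ^ 2 * c ^ 2));
    let κ : Fin (2 * K) → ℝ := fun a =>
      if (a : ℕ) % 2 = 0 then v ⟨(a : ℕ) / 2, by have := a.isLt; omega⟩
      else -v ⟨(a : ℕ) / 2, by have := a.isLt; omega⟩;
    let πs : Fin (2 * K) → ℝ := fun a => (1 - κ a * ω) / (2 * K);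
    IsMaximizer η (fun _ => ((2 * K : ℕ) : ℝ)⁻¹) r πs ∧
    (∀ q : Fin (2 * K) → ℝ,
      IsMaximizer η (fun _ => ((2 * K : ℕ) : ℝ)⁻¹) r q → q = πs) ∧
    (∀ a, πs a = η⁻¹ * ((2 * K : ℕ) : ℝ)⁻¹ /
      ((1 / 2 + (1 + Real.sqrt (1 + 4 * η ^ 2 * c ^ 2)) / (2 * η)) - r a)) := by
  have huniform : ∑ _ : Fin (2 * K), ((2 * K : ℕ) : ℝ)⁻¹ = 1 := by
    rw [sum_const, card_univ, Fintype.card_fin, nsmul_eq_mul, mul_inv_cancel₀ (by positivity)]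
  have hmean : ∑ a, pairedSign v a * ((2 * K : ℕ) : ℝ)⁻¹ = 0 := by
    rw [← sum_mul, sum_pairedSign, zero_mul]
  have hr (a : Fin (2 * K)) : r a = 1 / 2 - pairedSign v a * c := by
    rw [hrdef, sub_pairedSign_mul]
  simpa [div_eq_mul_inv, pairedSign] using stmt18_general hη (fun _ ↦ by positivity) huniform
    (pairedSign_eq_or_eq_neg hv) hmean (1 / 2) c hr
end
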